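/- Let k ≥ 1, ℓ be integers with gcd(ℓ,k) = 1, let m, s ≥ 1 be integers, and let g be a complex-valued arithmetic function with g(1) = 1. Define the generalized Ramanujan sum c_n(m;s,g) := ∑_{d | n, d^s | m} g(d)·μ(n/d). Then the partial sums ∑_{2 ≤ n ≤ x, p(n) ≡ ℓ (mod k)} c_n(m;s,g)/n converge, as x → ∞, to −1/φ(k), where φ is the Euler totient function. -/

import Mathlib

/-!
The theorem is Alladi's duality between smallest and largest prime factors, combined with the
prime number theorem in arithmetic progressions. Write `P n` for the largest prime factor of `n`.

*Reduction to the Möbius function.* Writing `n = d e` in the definition of `c_n(m; s, g)` gives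
finitely many sums, one for each `d` with `d ^ s ∣ m`, of `μ(e) / e` over those `e` for which the
smallest prime factor of `d e` lies in the class `ℓ` (`sum_genRamanujanSum_eq`). Only `d = 1`
contributes in the limit (`tendsto_sum_moebius_minFac_mul`): for `d > 1` the smallest prime factor
of `d e` is `min (p(e)) (p(d))`, and the contributions of `e = 1` and of `e ≥ 2` cancel.

*Duality and Axer's theorem.* For any function `h` and `n ≥ 2`,
`∑_{e ∣ n, e > 1} μ(e) h(p(e)) = -h(P n)` (`sum_divisors_moebius_minFac`). If `h` is bounded, the
partial sums of `μ(n) h(p(n))` are `o(N)` (`sublinear_moebius_minFac`), so Axer's theorem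
(`sublinear_sum_mul_fract`) shows that `∑ μ(n) h(p(n)) / n` converges to minus the mean value of
`h(P n)`, whenever the latter exists (`tendsto_sum_moebius_minFac`).

*Equidistribution of the largest prime factor.* Integers without prime factors above `N ^ ε` are
rare (`log_mul_card_smooth_le`). The others are written `n = m p` with `p = P n`, and the primes `p`
are equidistributed in the reduced residue classes (`sublinear_apWeight`). Hence `P n` falls in a
given reduced class with density `1 / φ(k)` (`sublinear_apWeight_maxPrimeFac`).

*Analytic input.* The prime number theorem in progressions (`tendsto_sum_residueClass_div`) and
the estimate `∑_{n ≤ N, (n, Q) = 1} μ(n) = o(N)` (`sublinear_muCoprime`) follow from the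
nonvanishing of Dirichlet `L`-functions on `Re s = 1` through a Wiener-Ikehara theorem
(`tendsto_sum_div_of_continuousOn`). The latter is proved by averaging against nonnegative kernels
with compactly supported Fourier transform and the Riemann-Lebesgue lemma.
-/

open Finset Filter

/-- The generalized Ramanujan sum `c_n(m; s, g) = ∑_{d ∣ n, d^s ∣ m} g(d) μ(n/d)`. -/
noncomputable def genRamanujanSum (g : ℕ → ℂ) (s m n : ℕ) : ℂ :=
  ∑ d ∈ n.divisors.filter (fun d => d ^ s ∣ m),
    g d * (ArithmeticFunction.moebius (n / d) : ℂ)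

open scoped Topology FourierTransform ContDiff

/-! ### A Tauberian theorem of Wiener-Ikehara type -/

/-- A bounded `f` whose Laplace transform extends continuously to the closed right half-plane has
vanishing averages against translates of a kernel `K` with compactly supported Fourier transform:
by Fubini and a limit `ε → 0+`, the average is the Fourier integral at `-x` of the continuous
compactly supported function `k y * F (2 π i y)`, to which the Riemann-Lebesgue lemma applies. -/
lemma tendsto_integral_mul_kernel {f : ℝ → ℝ} (hm : Measurable f) {C : ℝ} (hC : ∀ t, |f t| ≤ C)
    {F : ℂ → ℂ} (hF : ContinuousOn F {z | 0 ≤ z.re})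
    (hL : ∀ z : ℂ, 0 < z.re → ∫ t in Set.Ioi (0 : ℝ), (f t : ℂ) * Complex.exp (-(z * t)) = F z)
    {k : ℝ → ℂ} {K : ℝ → ℝ} (hk : Continuous k) (hks : HasCompactSupport k)
    (hkK : ∀ u, (K u : ℂ) = ∫ y : ℝ, Complex.exp (-(2 * Real.pi * Complex.I * u * y)) * k y)
    (hK : MeasureTheory.Integrable K) :
    Tendsto (fun x : ℝ => ∫ t in Set.Ioi (0 : ℝ), f t * K (t - x)) atTop (𝓝 0) := by
  have hki : MeasureTheory.Integrable k := hk.integrable_of_hasCompactSupport hks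
  have hC0 : 0 ≤ C := (abs_nonneg _).trans (hC 0)
  -- Fubini in the open half-plane, on the line `Re z = ε`
  have hreg : ∀ ε : ℝ, 0 < ε → ∀ x : ℝ,
      ∫ t in Set.Ioi (0 : ℝ), (f t : ℂ) * Complex.exp (-(ε * t)) * (K (t - x) : ℂ) =
      ∫ y : ℝ, Complex.exp (2 * Real.pi * Complex.I * x * y) * k y *
        F (ε + 2 * Real.pi * Complex.I * y) := by
    intro ε hε x
    have hexp : MeasureTheory.IntegrableOn (fun t : ℝ => (f t : ℂ) * Complex.exp (-(ε * t)))
        (Set.Ioi 0) := by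
      have h1 : MeasureTheory.IntegrableOn (fun t : ℝ => C * Real.exp (-ε * t)) (Set.Ioi 0) :=
        (exp_neg_integrableOn_Ioi 0 hε).const_mul C
      refine h1.mono' ?_ (Eventually.of_forall fun t => ?_)
      · exact (Measurable.aestronglyMeasurable (by fun_prop))
      · rw [norm_mul, Complex.norm_real, Complex.norm_exp]
        simp only [Complex.neg_re, Complex.mul_re, Complex.ofReal_re, Complex.ofReal_im, mul_zero,
          sub_zero, neg_mul]
        exact mul_le_mul_of_nonneg_right (hC t) (Real.exp_nonneg _)
    calc _ = ∫ t in Set.Ioi (0 : ℝ), ∫ y : ℝ, (f t : ℂ) * Complex.exp (-(ε * t)) *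
              (Complex.exp (-(2 * Real.pi * Complex.I * (t - x : ℝ) * y)) * k y) := by
          simp_rw [hkK, MeasureTheory.integral_const_mul]
      _ = ∫ y : ℝ, ∫ t in Set.Ioi (0 : ℝ), (f t : ℂ) * Complex.exp (-(ε * t)) *
              (Complex.exp (-(2 * Real.pi * Complex.I * (t - x : ℝ) * y)) * k y) := by
          refine MeasureTheory.integral_integral_swap ?_
          refine (hexp.mul_prod hki).mono ?_ (Eventually.of_forall fun p => ?_)
          · refine Measurable.aestronglyMeasurable ?_
            simp only [Function.uncurry_def]
            have := hk.measurable
            fun_prop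
          · simp only [Function.uncurry_def, norm_mul]
            rw [show ‖Complex.exp (-(2 * Real.pi * Complex.I * (p.1 - x : ℝ) * p.2))‖ = 1 by
              rw [Complex.norm_exp]; simp]
            simp
      _ = _ := by
          refine MeasureTheory.integral_congr_ae (Eventually.of_forall fun y => ?_)
          simp only
          rw [← hL _ (by simpa using hε), ← MeasureTheory.integral_const_mul]
          refine MeasureTheory.integral_congr_ae (Eventually.of_forall fun t => ?_)
          simp only
          rw [show Complex.exp (2 * Real.pi * Complex.I * x * y) * k y * (f t *
            Complex.exp (-((ε + 2 * Real.pi * Complex.I * y) * t))) = f t *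
            (Complex.exp (2 * Real.pi * Complex.I * x * y) *
              Complex.exp (-((ε + 2 * Real.pi * Complex.I * y) * t))) * k y by ring,
            ← Complex.exp_add, ← mul_assoc, mul_assoc (f t : ℂ), ← Complex.exp_add]
          congr 3
          push_cast
          ring
  -- letting `ε → 0+` on both sides by dominated convergence
  have hlim : ∀ x : ℝ, ((∫ t in Set.Ioi (0 : ℝ), f t * K (t - x) : ℝ) : ℂ) =
      ∫ y : ℝ, Complex.exp (2 * Real.pi * Complex.I * x * y) * k y *
        F (2 * Real.pi * Complex.I * y) := by
    intro x
    rw [← integral_complex_ofReal]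
    have hKx : MeasureTheory.Integrable (fun t => K (t - x)) := hK.comp_sub_right x
    have l1 : Tendsto (fun ε : ℝ =>
        ∫ t in Set.Ioi (0 : ℝ), (f t : ℂ) * Complex.exp (-(ε * t)) * (K (t - x) : ℂ)) (𝓝[>] 0)
        (𝓝 (∫ t in Set.Ioi (0 : ℝ), ((f t * K (t - x) : ℝ) : ℂ))) := by
      refine MeasureTheory.tendsto_integral_filter_of_dominated_convergence
        (fun t => C * |K (t - x)|) ?_ ?_ ?_ ?_
      · refine Eventually.of_forall fun ε => ?_
        refine MeasureTheory.AEStronglyMeasurable.mul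
          (Measurable.aestronglyMeasurable (by fun_prop)) ?_
        exact (Complex.continuous_ofReal.comp_aestronglyMeasurable
          hKx.aestronglyMeasurable).restrict
      · filter_upwards [self_mem_nhdsWithin] with ε hε
        filter_upwards [MeasureTheory.ae_restrict_mem measurableSet_Ioi] with t ht
        rw [norm_mul, norm_mul, Complex.norm_real, Complex.norm_real, Complex.norm_exp]
        refine mul_le_mul_of_nonneg_right ?_ (abs_nonneg _)
        have : Real.exp (-((ε : ℂ) * t)).re ≤ 1 := by
          rw [Real.exp_le_one_iff]
          have := mul_pos (Set.mem_Ioi.1 hε) (Set.mem_Ioi.1 ht)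
          simpa using this.le
        calc _ ≤ ‖f t‖ * 1 := by gcongr
          _ ≤ C := by rw [mul_one]; exact hC t
      · exact (hKx.abs.const_mul C).integrableOn
      · refine Eventually.of_forall fun t => ?_
        have : Continuous fun ε : ℝ => (f t : ℂ) * Complex.exp (-(ε * t)) * (K (t - x) : ℂ) := by
          fun_prop
        have h := (this.tendsto 0).mono_left (nhdsWithin_le_nhds (s := Set.Ioi 0))
        simpa using h
    have hcpt : IsCompact ((fun p : ℝ × ℝ => (p.1 : ℂ) + 2 * Real.pi * Complex.I * p.2) ''
        (Set.Icc 0 1 ×ˢ tsupport k)) :=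
      (isCompact_Icc.prod hks).image (by fun_prop)
    obtain ⟨B, hB⟩ := hcpt.exists_bound_of_continuousOn (hF.mono (by
      rintro _ ⟨p, hp, rfl⟩
      simpa using hp.1.1))
    have hcF : ∀ ε : ℝ, 0 ≤ ε → Continuous fun y : ℝ => F (ε + 2 * Real.pi * Complex.I * y) :=
      fun ε hε => hF.comp_continuous (by fun_prop) (fun y => by simpa using hε)
    have l2 : Tendsto (fun ε : ℝ => ∫ y : ℝ, Complex.exp (2 * Real.pi * Complex.I * x * y) * k y *
        F (ε + 2 * Real.pi * Complex.I * y)) (𝓝[>] 0)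
        (𝓝 (∫ y : ℝ, Complex.exp (2 * Real.pi * Complex.I * x * y) * k y *
        F (2 * Real.pi * Complex.I * y))) := by
      refine MeasureTheory.tendsto_integral_filter_of_dominated_convergence
        (fun y => ‖k y‖ * B) ?_ ?_ (hki.norm.mul_const B) ?_
      · filter_upwards [self_mem_nhdsWithin] with ε hε
        have := hcF ε (Set.mem_Ioi.1 hε).le
        exact Continuous.aestronglyMeasurable (Continuous.mul (by fun_prop) this)
      · filter_upwards [Ioc_mem_nhdsGT (zero_lt_one' ℝ)] with ε hε
        refine Eventually.of_forall fun y => ?_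
        rw [norm_mul, norm_mul]
        rw [show ‖Complex.exp (2 * Real.pi * Complex.I * x * y)‖ = 1 by
              rw [Complex.norm_exp]; simp, one_mul]
        by_cases hy : y ∈ tsupport k
        · gcongr
          exact hB _ ⟨(ε, y), ⟨⟨hε.1.le, hε.2⟩, hy⟩, rfl⟩
        · simp [image_eq_zero_of_notMem_tsupport hy]
      · refine Eventually.of_forall fun y => ?_
        refine Tendsto.const_mul _ ?_
        have h1 : Tendsto F (𝓝[{z | 0 ≤ z.re}] (2 * Real.pi * Complex.I * y))
            (𝓝 (F (2 * Real.pi * Complex.I * y))) := hF _ (by simp)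
        refine h1.comp (tendsto_nhdsWithin_iff.2 ⟨?_, ?_⟩)
        · have : Continuous fun ε : ℝ => (ε : ℂ) + 2 * Real.pi * Complex.I * y := by fun_prop
          have h := (this.tendsto 0).mono_left (nhdsWithin_le_nhds (s := Set.Ioi 0))
          simpa using h
        · filter_upwards [self_mem_nhdsWithin] with ε hε
          simpa using (Set.mem_Ioi.1 hε).le
    refine tendsto_nhds_unique l1 (l2.congr' ?_)
    filter_upwards [self_mem_nhdsWithin] with ε hε
    exact (hreg ε hε x).symm
  have hRL := Real.tendsto_integral_exp_smul_cocompact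
    (fun y : ℝ => k y * F (2 * Real.pi * Complex.I * y))
  have hneg : Tendsto (fun x : ℝ => -x) atTop (cocompact ℝ) :=
    tendsto_neg_atTop_atBot.mono_right (by rw [cocompact_eq_atBot_atTop]; exact le_sup_left)
  have h := hRL.comp hneg
  have h2 : Tendsto (fun x : ℝ => ((∫ t in Set.Ioi (0 : ℝ), f t * K (t - x) : ℝ) : ℂ)) atTop
      (𝓝 ((0 : ℝ) : ℂ)) := by
    simp_rw [hlim]
    refine (h.congr fun x => ?_)
    refine MeasureTheory.integral_congr_ae (Eventually.of_forall fun y => ?_)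
    simp only [Circle.smul_def, Real.fourierChar_apply, smul_eq_mul, ← mul_assoc]
    congr 3
    push_cast
    ring
  simpa [Function.comp_def] using (Complex.continuous_re.tendsto _).comp h2

/-- A nonnegative integrable kernel with compactly supported Fourier transform: `K = |𝓕 b|²` for
an even bump function `b`, which is the Fourier transform of `k = b ⋆ b`. -/
lemma exists_nonneg_bandlimited_kernel :
    ∃ (k : ℝ → ℂ) (K : ℝ → ℝ), Continuous k ∧ HasCompactSupport k ∧
      (∀ u, (K u : ℂ) = ∫ y : ℝ, Complex.exp (-(2 * Real.pi * Complex.I * u * y)) * k y) ∧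
      (∀ u, 0 ≤ K u) ∧ MeasureTheory.Integrable K ∧ 0 < ∫ u, K u := by
  let b : ContDiffBump (0 : ℝ) := ⟨1, 2, one_pos, one_lt_two⟩
  let f : ℝ → ℂ := fun x => ((b x : ℝ) : ℂ)
  have hfs : HasCompactSupport f := b.hasCompactSupport.comp_left (g := Complex.ofReal) (by simp)
  have hfc : ContDiff ℝ ∞ f := Complex.ofRealCLM.contDiff.comp b.contDiff
  have hfcont : Continuous f := hfc.continuous
  have hfi : MeasureTheory.Integrable f := hfcont.integrable_of_hasCompactSupport hfs
  let φ : SchwartzMap ℝ ℂ := hfs.toSchwartzMap hfc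
  have hφ : ∀ u, 𝓕 f u = (𝓕 φ) u := fun u => by
    rw [SchwartzMap.fourier_coe]; rfl
  have hreal : ∀ u, (starRingEnd ℂ) (𝓕 f u) = 𝓕 f u := by
    intro u
    rw [Real.fourier_real_eq, ← integral_conj, ← MeasureTheory.integral_neg_eq_self]
    refine MeasureTheory.integral_congr_ae (Eventually.of_forall fun y => ?_)
    have hb : b (-y) = b y := b.neg y
    have h2 : (starRingEnd ℂ) (2 : ℂ) = 2 := map_ofNat _ 2
    simp [f, Circle.smul_def, hb, Real.fourierChar_apply, ← Complex.exp_conj, h2]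
  have hKi : MeasureTheory.Integrable fun u => ‖𝓕 f u‖ ^ 2 := by
    simpa [hφ] using ((𝓕 φ).memLp 2).integrable_norm_pow (by norm_num)
  refine ⟨MeasureTheory.convolution f f (ContinuousLinearMap.mul ℂ ℂ), fun u => ‖𝓕 f u‖ ^ 2,
    ?_, ?_, ?_, fun u => by positivity, ?_, ?_⟩
  · exact hfs.continuous_convolution_right _ hfi.locallyIntegrable hfcont
  · exact hfs.convolution _ hfs
  · intro u
    have h1 := Real.fourier_mul_convolution_eq hfi hfi u
    have h2 : ((‖𝓕 f u‖ ^ 2 : ℝ) : ℂ) = 𝓕 f u * 𝓕 f u := by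
      conv_rhs => rw [← hreal u, hreal u]
      nth_rewrite 3 [← hreal u]
      rw [Complex.mul_conj, Complex.normSq_eq_norm_sq]
    rw [h2, ← h1, Real.fourier_real_eq_integral_exp_smul]
    refine MeasureTheory.integral_congr_ae (Eventually.of_forall fun y => ?_)
    simp only [smul_eq_mul]
    congr 2
    push_cast
    ring
  · exact hKi
  · have hc : Continuous fun u => ‖𝓕 f u‖ ^ 2 := by
      simp only [hφ]; fun_prop
    refine MeasureTheory.integral_pos_of_integrable_nonneg_nonzero (x := 0) hc hKi
      (fun u => by positivity) ?_
    have h0 : 𝓕 f 0 = ((∫ x, b x : ℝ) : ℂ) := by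
      rw [Real.fourier_real_eq, ← integral_complex_ofReal]
      simp [f]
    have := b.integral_pos (μ := MeasureTheory.volume)
    rw [h0]
    simpa using this.ne'

/-- Under the Laplace transform hypotheses, `f` cannot stay `≥ δ` on windows of fixed length `h`
arbitrarily far out: a kernel average centred in such a window would stay bounded below. -/
lemma eventually_exists_lt_of_laplace {f : ℝ → ℝ} (hm : Measurable f) {C : ℝ}
    (hC : ∀ t, |f t| ≤ C) {F : ℂ → ℂ} (hF : ContinuousOn F {z | 0 ≤ z.re})
    (hL : ∀ z : ℂ, 0 < z.re → ∫ t in Set.Ioi (0 : ℝ), (f t : ℂ) * Complex.exp (-(z * t)) = F z)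
    {δ h : ℝ} (hδ : 0 < δ) (hh : 0 < h) :
    ∀ᶠ a in atTop, ∃ u ∈ Set.Icc a (a + h), f u < δ := by
  obtain ⟨k, K, hk, hks, hkK, hK0, hKi, hI⟩ := exists_nonneg_bandlimited_kernel
  set I := ∫ u, K u with hIdef
  have hC0 : 0 ≤ C := (abs_nonneg _).trans (hC 0)
  -- almost all the mass of `K` lies in `(-R, R]`
  obtain ⟨R, hR0, hR⟩ : ∃ R : ℝ, 0 < R ∧
      I - δ * I / (2 * (δ + C)) < ∫ u in (-R)..R, K u := by
    have h1 : Tendsto (fun R : ℝ => ∫ u in (-R)..R, K u) atTop (𝓝 I) :=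
      MeasureTheory.intervalIntegral_tendsto_integral hKi tendsto_neg_atTop_atBot tendsto_id
    have h2 : I - δ * I / (2 * (δ + C)) < I := sub_lt_self _ (by positivity)
    obtain ⟨R, h3, h4⟩ := ((eventually_gt_atTop 0).and (h1.eventually (lt_mem_nhds h2))).exists
    exact ⟨R, h3, h4⟩
  -- rescale so that a window of length `h` for `f` has length `2 * R`
  set lam := 2 * R / h with hlam
  have hlam0 : 0 < lam := by positivity
  have hT := tendsto_integral_mul_kernel (f := fun v => f (lam⁻¹ * v)) (C := C)
    (F := fun z => lam * F (lam * z)) (by fun_prop) (fun t => hC _)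
    (by
      refine continuousOn_const.mul (hF.comp (by fun_prop) ?_)
      intro z hz
      simpa using mul_nonneg hlam0.le hz)
    (by
      intro z hz
      rw [← hL _ (by simpa using mul_pos hlam0 hz)]
      have := MeasureTheory.integral_comp_mul_left_Ioi
        (fun t : ℝ => (f t : ℂ) * Complex.exp (-(lam * z * t))) 0 (inv_pos.2 hlam0)
      rw [mul_zero, inv_inv] at this
      rw [← Complex.real_smul, ← this]
      refine MeasureTheory.integral_congr_ae (Eventually.of_forall fun t => ?_)
      simp only
      congr 3
      push_cast
      have : (lam : ℂ) ≠ 0 := by exact_mod_cast hlam0.ne'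
      field_simp) hk hks hkK hKi
  have hx : Tendsto (fun a : ℝ => lam * a + R) atTop atTop :=
    tendsto_atTop_add_const_right _ _ (tendsto_id.const_mul_atTop hlam0)
  have hev := (hT.comp hx).eventually (gt_mem_nhds (show (0 : ℝ) < δ * I / 2 by positivity))
  filter_upwards [hev, eventually_gt_atTop 0] with a ha ha0
  by_contra! hcon
  refine absurd ha (not_lt.2 ?_)
  set x := lam * a + R with hxdef
  simp only [Function.comp]
  rw [← MeasureTheory.integral_indicator measurableSet_Ioi]
  have hKx : MeasureTheory.Integrable (fun t => K (t - x)) := hKi.comp_sub_right x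
  have hKw : MeasureTheory.Integrable ((Set.Ioc (-R) R).indicator K) :=
    hKi.indicator measurableSet_Ioc
  have hlow : (δ + C) * (∫ u in (-R)..R, K u) - C * I =
      ∫ v, ((δ + C) * (Set.Ioc (-R) R).indicator K (v - x) - C * K (v - x)) := by
    rw [MeasureTheory.integral_sub ((hKw.comp_sub_right x).const_mul _) (hKx.const_mul _),
      MeasureTheory.integral_const_mul, MeasureTheory.integral_const_mul,
      MeasureTheory.integral_sub_right_eq_self (fun v => (Set.Ioc (-R) R).indicator K v),
      MeasureTheory.integral_sub_right_eq_self (fun v => K v),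
      MeasureTheory.integral_indicator measurableSet_Ioc,
      intervalIntegral.integral_of_le (by linarith)]
  calc δ * I / 2 = (δ + C) * (I - δ * I / (2 * (δ + C))) - C * I := by
        field_simp; ring
    _ ≤ (δ + C) * (∫ u in (-R)..R, K u) - C * I := by gcongr
    _ = _ := hlow
    _ ≤ _ := by
      refine MeasureTheory.integral_mono
        (((hKw.comp_sub_right x).const_mul _).sub (hKx.const_mul _)) ?_ fun v => ?_
      · refine MeasureTheory.Integrable.indicator ?_ measurableSet_Ioi
        refine hKx.bdd_mul (c := C) (Measurable.aestronglyMeasurable (by fun_prop))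
          (Eventually.of_forall fun t => hC _)
      · simp only
        have hKv := hK0 (v - x)
        by_cases hv : v - x ∈ Set.Ioc (-R) R
        · have hla : 0 < lam * a := mul_pos hlam0 ha0
          have hlh : lam * h = 2 * R := by rw [hlam]; field_simp
          have hv0 : 0 < v := by have := hv.1; linarith
          rw [Set.indicator_of_mem hv, Set.indicator_of_mem (Set.mem_Ioi.2 hv0)]
          have hw : δ ≤ f (lam⁻¹ * v) := by
            refine hcon _ ⟨?_, ?_⟩
            · rw [inv_mul_eq_div, le_div_iff₀ hlam0]; have := hv.1; linarith
            · rw [inv_mul_eq_div, div_le_iff₀ hlam0]; have := hv.2; linarith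
          nlinarith
        · rw [Set.indicator_of_notMem hv, mul_zero, zero_sub]
          by_cases hv0 : v ∈ Set.Ioi (0 : ℝ)
          · rw [Set.indicator_of_mem hv0]
            have := (abs_le.1 (hC (lam⁻¹ * v))).1
            nlinarith
          · rw [Set.indicator_of_notMem hv0]
            nlinarith

/-- A Tauberian theorem for Laplace transforms: the side condition `hslow` says that `f` is slowly
decreasing, so that one large value of `|f|` forces a whole window of large values. -/
lemma tendsto_zero_of_laplace {f : ℝ → ℝ} (hm : Measurable f) {C : ℝ}
    (hC : ∀ t, |f t| ≤ C) {F : ℂ → ℂ} (hF : ContinuousOn F {z | 0 ≤ z.re})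
    (hL : ∀ z : ℂ, 0 < z.re → ∫ t in Set.Ioi (0 : ℝ), (f t : ℂ) * Complex.exp (-(z * t)) = F z)
    (hslow : ∀ δ > 0, ∃ h > 0, ∀ t, 0 ≤ t → ∀ u ∈ Set.Icc t (t + h), f t - δ ≤ f u) :
    Tendsto f atTop (𝓝 0) := by
  rw [Metric.tendsto_nhds]
  intro δ hδ
  obtain ⟨h, hh, hs⟩ := hslow (δ / 2) (half_pos hδ)
  have h1 := eventually_exists_lt_of_laplace hm hC hF hL (half_pos hδ) hh
  have h2 := eventually_exists_lt_of_laplace (f := fun t => -f t) hm.neg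
    (fun t => by simpa using hC t) hF.neg
    (fun z hz => by
      rw [Pi.neg_apply, ← hL z hz, ← MeasureTheory.integral_neg]
      simp) (half_pos hδ) hh
  have h2' := (tendsto_atTop_add_const_right _ (-h) tendsto_id).eventually h2
  filter_upwards [h1, h2', eventually_ge_atTop h] with t ⟨u, hu, hfu⟩ ⟨v, hv, hfv⟩ ht
  simp only [id] at hv
  have e1 := hs t (by linarith) u hu
  have e2 := hs v (by linarith [hv.1]) t ⟨by linarith [hv.2], by linarith [hv.1]⟩
  rw [Real.dist_eq, sub_zero, abs_lt]
  constructor <;> linarith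

/-- The Wiener-Ikehara theorem, under the additional assumption of a Chebyshev-type upper bound:
`tendsto_zero_of_laplace` is applied to `t ↦ e^{-t} ∑_{n ≤ e^t} c n - κ`. -/
theorem tendsto_sum_div_of_continuousOn {c : ℕ → ℝ} (hc : ∀ n, 0 ≤ c n) {C : ℝ}
    (hC : ∀ N : ℕ, ∑ n ∈ Icc 1 N, c n ≤ C * N) {κ : ℝ} {G : ℂ → ℂ}
    (hG : ContinuousOn G {s | 1 ≤ s.re})
    (hD : ∀ s : ℂ, 1 < s.re → LSeries (fun n => (c n : ℂ)) s = G s + κ / (s - 1)) :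
    Tendsto (fun N : ℕ => (∑ n ∈ Icc 1 N, c n) / N) atTop (𝓝 κ) := by
  have hC0 : 0 ≤ C := by
    have := hC 1
    simp only [Icc_self, sum_singleton, Nat.cast_one, mul_one] at this
    exact (hc 1).trans this
  set S : ℝ → ℝ := fun x => ∑ n ∈ Icc 1 ⌊x⌋₊, c n with hS
  have hSm : Measurable S := (measurable_from_nat (f := fun N : ℕ => ∑ n ∈ Icc 1 N, c n)).comp
    Nat.measurable_floor
  have hS0 : ∀ x, 0 ≤ S x := fun x => sum_nonneg fun n _ => hc n
  have hSmono : Monotone S := fun x y hxy => by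
    refine sum_le_sum_of_subset_of_nonneg ?_ fun n _ _ => hc n
    exact Icc_subset_Icc_right (Nat.floor_mono hxy)
  have hSle : ∀ x, 0 ≤ x → S x ≤ C * x := fun x hx =>
    (hC _).trans (mul_le_mul_of_nonneg_left (Nat.floor_le hx) hC0)
  set p : ℝ → ℝ := fun t => S (Real.exp t) * Real.exp (-t) with hp
  have hp0 : ∀ t, 0 ≤ p t := fun t => mul_nonneg (hS0 _) (Real.exp_nonneg _)
  have hpC : ∀ t, p t ≤ C := fun t => by
    calc p t ≤ C * Real.exp t * Real.exp (-t) :=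
          mul_le_mul_of_nonneg_right (hSle _ (Real.exp_nonneg _)) (Real.exp_nonneg _)
      _ = C := by rw [mul_assoc, ← Real.exp_add]; simp
  have hpm : Measurable p := by
    have := hSm.comp Real.measurable_exp
    exact this.mul (by fun_prop)
  have hO : (fun N : ℕ => ∑ n ∈ Icc 1 N, c n) =O[atTop] fun N => (N : ℝ) ^ (1 : ℝ) := by
    refine Asymptotics.IsBigO.of_bound C (Eventually.of_forall fun N => ?_)
    rw [Real.norm_of_nonneg (sum_nonneg fun n _ => hc n), Real.rpow_one, Real.norm_natCast]
    exact hC N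
  have hexpi : ∀ z : ℂ, 0 < z.re →
      MeasureTheory.IntegrableOn (fun t : ℝ => Complex.exp (-(z * t))) (Set.Ioi 0) := by
    intro z hz
    have := integrableOn_exp_mul_complex_Ioi (a := -z) (by simpa using hz) 0
    simpa using this
  have hlim : Tendsto (fun t => p t - κ) atTop (𝓝 0) := by
    refine tendsto_zero_of_laplace (C := C + |κ|) (F := fun z => (G (1 + z) - κ) / (1 + z))
      (hpm.sub_const κ) ?_ ?_ ?_ ?_
    · intro t
      calc |p t - κ| ≤ |p t| + |κ| := abs_sub _ _
        _ ≤ C + |κ| := by rw [abs_of_nonneg (hp0 t)]; linarith [hpC t]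
    · refine ContinuousOn.div (ContinuousOn.sub (hG.comp (by fun_prop) ?_) continuousOn_const)
        (by fun_prop) ?_
      · intro z hz
        simpa using hz
      · intro z hz h0
        have h1 := congrArg Complex.re h0
        simp only [Complex.add_re, Complex.one_re, Complex.zero_re] at h1
        have : 0 ≤ z.re := hz
        linarith
    · intro z hz
      have hz0 : z ≠ 0 := fun h => by simp [h] at hz
      have hs : 1 < (1 + z).re := by simpa using hz
      have hs0 : 1 + z ≠ 0 := fun h => by rw [h] at hs; simp at hs; linarith
      have e1 := LSeries_eq_mul_integral_of_nonneg c zero_le_one hs hO hc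
      have e2 : ∫ t in Set.Ioi (1 : ℝ), (∑ n ∈ Icc 1 ⌊t⌋₊, (c n : ℂ)) * (t : ℂ) ^ (-(1 + z + 1)) =
          ∫ t in Set.Ioi (0 : ℝ), (p t : ℂ) * Complex.exp (-(z * t)) := by
        have := MeasureTheory.integral_comp_exp_Ioi (fun t : ℝ =>
          (∑ n ∈ Icc 1 ⌊t⌋₊, (c n : ℂ)) * (t : ℂ) ^ (-(1 + z + 1))) 0
        rw [Real.exp_zero] at this
        rw [← this]
        refine MeasureTheory.integral_congr_ae (Eventually.of_forall fun t => ?_)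
        simp only [hp, hS, Complex.real_smul]
        rw [Complex.ofReal_exp, Complex.cpow_def_of_ne_zero (Complex.exp_ne_zero _),
          Complex.log_exp (by simp [Real.pi_pos]) (by simp [Real.pi_pos.le])]
        push_cast
        rw [show Complex.exp t * ((∑ n ∈ Icc 1 ⌊Real.exp t⌋₊, (c n : ℂ)) *
          Complex.exp (t * (-(1 + z + 1)))) = (∑ n ∈ Icc 1 ⌊Real.exp t⌋₊, (c n : ℂ)) *
          (Complex.exp t * Complex.exp (t * (-(1 + z + 1)))) by ring, ← Complex.exp_add,
          mul_assoc, ← Complex.exp_add]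
        congr 2
        ring
      have e3 : ∫ t in Set.Ioi (0 : ℝ), Complex.exp (-(z * t)) = 1 / z := by
        have := integral_exp_mul_complex_Ioi (a := -z) (by simpa using hz) 0
        simpa [neg_div_neg_eq] using this
      have hpint : MeasureTheory.IntegrableOn
          (fun t : ℝ => (p t : ℂ) * Complex.exp (-(z * t))) (Set.Ioi 0) := by
        refine (hexpi z hz).bdd_mul (c := C) ?_ (Eventually.of_forall fun t => ?_)
        · exact Measurable.aestronglyMeasurable (by fun_prop)
        · rw [Complex.norm_real, Real.norm_of_nonneg (hp0 t)]; exact hpC t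
      have e4 : ∫ t in Set.Ioi (0 : ℝ), ((p t - κ : ℝ) : ℂ) * Complex.exp (-(z * t)) =
          (∫ t in Set.Ioi (0 : ℝ), (p t : ℂ) * Complex.exp (-(z * t))) - κ * (1 / z) := by
        rw [← e3, ← MeasureTheory.integral_const_mul,
          ← MeasureTheory.integral_sub hpint ((hexpi z hz).const_mul _)]
        refine MeasureTheory.integral_congr_ae (Eventually.of_forall fun t => ?_)
        push_cast
        ring
      rw [e4, ← e2]
      rw [hD _ hs] at e1
      have e5 := (div_eq_iff hs0).2 (e1.trans (mul_comm _ _))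
      rw [← e5]
      simp only [add_sub_cancel_left]
      field_simp
      ring
    · intro δ hδ
      refine ⟨δ / (C + 1), by positivity, fun t _ u hu => ?_⟩
      have h1 : Real.exp (t - u) * p t ≤ p u := by
        have : S (Real.exp t) ≤ S (Real.exp u) := hSmono (Real.exp_le_exp.2 hu.1)
        calc Real.exp (t - u) * p t = S (Real.exp t) * (Real.exp (t - u) * Real.exp (-t)) := by
              simp only [hp]; ring
          _ = S (Real.exp t) * Real.exp (-u) := by rw [← Real.exp_add]; congr 2; ring
          _ ≤ p u := mul_le_mul_of_nonneg_right this (Real.exp_nonneg _)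
      have h2 := Real.add_one_le_exp (t - u)
      have h3 : (u - t) * p t ≤ δ := by
        have h4 : u - t ≤ δ / (C + 1) := by linarith [hu.2]
        calc (u - t) * p t ≤ δ / (C + 1) * C :=
              mul_le_mul h4 (hpC t) (hp0 t) (by positivity)
          _ ≤ δ := by rw [div_mul_eq_mul_div, div_le_iff₀ (by positivity)]; nlinarith
      nlinarith [hp0 t, mul_le_mul_of_nonneg_right h2 (hp0 t)]
  have hlog : Tendsto (fun N : ℕ => Real.log N) atTop atTop :=
    Real.tendsto_log_atTop.comp tendsto_natCast_atTop_atTop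
  have h1 := (hlim.comp hlog).add_const κ
  rw [zero_add] at h1
  refine h1.congr' ?_
  filter_upwards [eventually_gt_atTop 0] with N hN
  have hN' : (0 : ℝ) < N := by exact_mod_cast hN
  simp only [hp, hS, Function.comp, sub_add_cancel]
  rw [Real.exp_neg, Real.exp_log hN', Nat.floor_natCast, div_eq_mul_inv]

/-! ### Primes in progressions and the Möbius function -/

/-- `A N = o(N)`, in the form `|A N| ≤ ε N + C(ε)`, which holds for all `N` at once. -/
def Sublinear (A : ℕ → ℝ) : Prop := ∀ ε > 0, ∃ C : ℝ, 0 ≤ C ∧ ∀ N : ℕ, |A N| ≤ ε * N + C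

lemma Sublinear.of_tendsto {A : ℕ → ℝ} (h : Tendsto (fun N : ℕ => A N / N) atTop (𝓝 0)) :
    Sublinear A := by
  intro ε hε
  obtain ⟨N₀, hN₀⟩ := eventually_atTop.1 ((h.eventually (Metric.ball_mem_nhds _ hε)).and
    (eventually_gt_atTop 0))
  refine ⟨∑ n ∈ range N₀, |A n|, sum_nonneg fun _ _ => abs_nonneg _, fun N => ?_⟩
  rcases lt_or_ge N N₀ with hN | hN
  · have h1 : |A N| ≤ ∑ n ∈ range N₀, |A n| :=
      single_le_sum (f := fun n => |A n|) (fun _ _ => abs_nonneg _) (mem_range.2 hN)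
    have : 0 ≤ ε * (N : ℝ) := by positivity
    linarith
  · obtain ⟨h1, h2⟩ := hN₀ N hN
    have hN' : (0 : ℝ) < N := by exact_mod_cast h2
    rw [Real.dist_eq, sub_zero, abs_div, Nat.abs_cast, div_lt_iff₀ hN'] at h1
    have : 0 ≤ ∑ n ∈ range N₀, |A n| := sum_nonneg fun _ _ => abs_nonneg _
    linarith

lemma Sublinear.tendsto {A : ℕ → ℝ} (h : Sublinear A) :
    Tendsto (fun N : ℕ => A N / N) atTop (𝓝 0) := by
  rw [Metric.tendsto_atTop]
  intro ε hε
  obtain ⟨C, hC, hA⟩ := h (ε / 2) (half_pos hε)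
  obtain ⟨N₀, hN₀⟩ := exists_nat_gt (2 * C / ε)
  refine ⟨N₀ + 1, fun N hN => ?_⟩
  have hN1 : (N₀ : ℝ) + 1 ≤ N := by exact_mod_cast hN
  have hN' : (0 : ℝ) < N := by have : (0 : ℝ) ≤ N₀ := by positivity
                               linarith
  rw [Real.dist_eq, sub_zero, abs_div, Nat.abs_cast, div_lt_iff₀ hN']
  have h2 : 2 * C / ε < N := by linarith
  rw [div_lt_iff₀ hε] at h2
  have := hA N
  nlinarith

lemma Sublinear.add {A B : ℕ → ℝ} (hA : Sublinear A) (hB : Sublinear B) :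
    Sublinear fun N => A N + B N := by
  intro ε hε
  obtain ⟨C, hC, h1⟩ := hA (ε / 2) (half_pos hε)
  obtain ⟨D, hD, h2⟩ := hB (ε / 2) (half_pos hε)
  refine ⟨C + D, by positivity, fun N => (abs_add_le _ _).trans ?_⟩
  have := h1 N
  have := h2 N
  linarith

lemma Sublinear.of_abs_le {A B : ℕ → ℝ} (hB : Sublinear B) (h : ∀ N, |A N| ≤ |B N|) :
    Sublinear A := by
  intro ε hε
  obtain ⟨C, hC, h1⟩ := hB ε hε
  exact ⟨C, hC, fun N => (h N).trans (h1 N)⟩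

lemma Sublinear.const_mul {A : ℕ → ℝ} (hA : Sublinear A) (r : ℝ) :
    Sublinear fun N => r * A N := by
  refine Sublinear.of_tendsto ?_
  simpa [mul_div_assoc] using hA.tendsto.const_mul r

lemma Sublinear.sum {ι : Type*} (s : Finset ι) {A : ι → ℕ → ℝ} (h : ∀ i ∈ s, Sublinear (A i)) :
    Sublinear fun N => ∑ i ∈ s, A i N := by
  refine Sublinear.of_tendsto ?_
  have := tendsto_finsetSum s fun i hi => (h i hi).tendsto
  simpa [Finset.sum_div] using this

lemma Sublinear.comp_div {A : ℕ → ℝ} (hA : Sublinear A) (d : ℕ) :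
    Sublinear fun N => A (N / d) := by
  intro ε hε
  obtain ⟨C, hC, h1⟩ := hA ε hε
  refine ⟨C, hC, fun N => (h1 _).trans ?_⟩
  have : ((N / d : ℕ) : ℝ) ≤ N := by exact_mod_cast Nat.div_le_self N d
  gcongr

open ArithmeticFunction in
/-- The prime number theorem in arithmetic progressions, for the von Mangoldt function. -/
lemma tendsto_sum_residueClass_div {q : ℕ} [NeZero q] {a : ZMod q} (ha : IsUnit a) :
    Tendsto (fun N : ℕ => (∑ n ∈ Icc 1 N, vonMangoldt.residueClass a n) / N) atTop
      (𝓝 (1 / q.totient)) := by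
  refine tendsto_sum_div_of_continuousOn (C := Real.log 4 + 4)
    (G := vonMangoldt.LFunctionResidueClassAux a)
    (vonMangoldt.residueClass_nonneg a) (fun N => ?_)
    (vonMangoldt.continuousOn_LFunctionResidueClassAux a) fun s hs => ?_
  · have h1 : ∑ n ∈ Icc 1 N, vonMangoldt.residueClass a n ≤ Chebyshev.psi N := by
      rw [Chebyshev.psi, Nat.floor_natCast]
      exact sum_le_sum fun n _ => vonMangoldt.residueClass_le a n
    exact h1.trans (Chebyshev.psi_le_const_mul_self (Nat.cast_nonneg N))
  · rw [vonMangoldt.eqOn_LFunctionResidueClassAux ha hs]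
    simp

/-- The balanced indicator `1_{p ≡ a (mod q)} - 1/φ(q)`. -/
noncomputable def apWeight {q : ℕ} (a : ZMod q) (p : ℕ) : ℝ :=
  (if (p : ZMod q) = a then 1 else 0) - 1 / (q.totient : ℝ)

lemma abs_apWeight_le {q : ℕ} (a : ZMod q) (p : ℕ) : |apWeight a p| ≤ 1 := by
  have h1 : 1 / (q.totient : ℝ) ≤ 1 := by
    rcases Nat.eq_zero_or_pos q.totient with h | h
    · simp [h]
    · rw [div_le_one (by exact_mod_cast h)]; exact_mod_cast h
  have h0 : 0 ≤ 1 / (q.totient : ℝ) := by positivity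
  unfold apWeight
  split_ifs <;> rw [abs_le] <;> constructor <;> linarith

open ArithmeticFunction in
/-- The prime number theorem in arithmetic progressions, with weights `log p`: the classes modulo
`q` and modulo `1` are compared, and the prime powers contribute `O(√N)`. -/
lemma sublinear_apWeight {q : ℕ} [NeZero q] {a : ZMod q} (ha : IsUnit a) :
    Sublinear fun N => ∑ n ∈ Icc 1 N, if n.Prime then apWeight a n * Real.log n else 0 := by
  have h1 := tendsto_sum_residueClass_div ha
  have h2 := tendsto_sum_residueClass_div (q := 1) (a := 0) (isUnit_of_subsingleton _)
  have h3 : Sublinear fun N => ∑ n ∈ Icc 1 N, apWeight a n * vonMangoldt n := by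
    refine Sublinear.of_tendsto ?_
    have := h1.sub (h2.const_mul (1 / (q.totient : ℝ)))
    simp only [Nat.totient_one, Nat.cast_one, div_one, mul_one, sub_self] at this
    refine this.congr fun N => ?_
    rw [← mul_div_assoc, ← sub_div, mul_sum, ← sum_sub_distrib]
    congr 1
    refine sum_congr rfl fun n _ => ?_
    have hn : (n : ZMod 1) = 0 := Subsingleton.elim _ _
    simp only [vonMangoldt.residueClass, Set.indicator, Set.mem_ofPred_eq, apWeight, hn]
    split_ifs <;> simp_all
    ring
  obtain ⟨D, hD⟩ := Chebyshev.psi_sub_theta_le_mul_sqrt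
  have h4 : Sublinear fun N => ∑ n ∈ Icc 1 N,
      if n.Prime then 0 else -(apWeight a n * vonMangoldt n) := by
    have h5 : Sublinear fun N : ℕ => D * Real.sqrt N := by
      refine Sublinear.const_mul (Sublinear.of_tendsto ?_) D
      have : Tendsto (fun N : ℕ => (Real.sqrt N)⁻¹) atTop (𝓝 0) :=
        (Real.tendsto_sqrt_atTop.comp tendsto_natCast_atTop_atTop).inv_tendsto_atTop
      refine this.congr fun N => ?_
      rw [Real.sqrt_div_self']
      simp
    refine h5.of_abs_le fun N => (abs_sum_le_sum_abs _ _).trans ?_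
    refine le_trans ?_ (le_abs_self _)
    refine le_trans ?_ (hD N)
    rw [Chebyshev.psi_sub_theta_eq_sum_not_prime, Nat.floor_natCast, sum_filter]
    refine sum_le_sum fun n _ => ?_
    by_cases hn : n.Prime
    · simp [hn]
    · simp only [hn, if_false, abs_neg, abs_mul, not_false_eq_true, if_true]
      rw [abs_of_nonneg vonMangoldt_nonneg]
      exact mul_le_of_le_one_left vonMangoldt_nonneg (abs_apWeight_le a n)
  have h6 := h3.add h4
  refine h6.of_abs_le fun N => le_of_eq ?_
  rw [← sum_add_distrib]
  congr 1
  refine sum_congr rfl fun n _ => ?_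
  by_cases hn : n.Prime
  · simp [hn, vonMangoldt_apply_prime hn]
  · simp [hn]

/-- `μ(n)` restricted to the integers coprime to `Q`. -/
noncomputable def muCoprime (Q n : ℕ) : ℝ :=
  if n.Coprime Q then (ArithmeticFunction.moebius n : ℝ) else 0

lemma abs_moebius_le_one_real (n : ℕ) : |(ArithmeticFunction.moebius n : ℝ)| ≤ 1 := by
  exact_mod_cast ArithmeticFunction.abs_moebius_le_one (n := n)

lemma abs_muCoprime_le (Q n : ℕ) : |muCoprime Q n| ≤ 1 := by
  unfold muCoprime
  split_ifs
  · exact abs_moebius_le_one_real n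
  · simp

open DirichletCharacter in
/-- The Möbius function on integers coprime to `Q` has partial sums `o(N)`. Wiener-Ikehara is
applied to the nonnegative coefficients `1 + muCoprime Q n`, with Dirichlet series
`ζ(s) + 1 / L(s, χ₀)`, where `χ₀` is the trivial character modulo `Q`. -/
lemma sublinear_muCoprime (Q : ℕ) (hQ : Q ≠ 0) :
    Sublinear fun N => ∑ n ∈ Icc 1 N, muCoprime Q n := by
  have : NeZero Q := ⟨hQ⟩
  have hmu := fun n => abs_le.1 (abs_muCoprime_le Q n)
  have hne : ∀ s : ℂ, 1 ≤ s.re → LFunctionTrivChar₁ Q s ≠ 0 := by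
    intro s hs
    rcases eq_or_ne s 1 with rfl | h1
    · exact LFunctionTrivChar₁_apply_one_ne_zero Q
    · rw [LFunctionTrivChar₁, Function.update_of_ne h1]
      exact mul_ne_zero (sub_ne_zero.2 h1) (LFunction_ne_zero_of_one_le_re 1 (.inr h1) hs)
  have hlim : Tendsto (fun N : ℕ => (∑ n ∈ Icc 1 N, (1 + muCoprime Q n)) / N) atTop (𝓝 1) := by
    refine tendsto_sum_div_of_continuousOn (C := 2)
      (G := fun s => Function.update (fun s => riemannZeta s - 1 / (s - 1)) 1
        (Real.eulerMascheroniConstant : ℂ) s + (s - 1) / LFunctionTrivChar₁ Q s)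
      (fun n => by linarith [(hmu n).1]) (fun N => ?_) ?_ fun s hs => ?_
    · calc _ ≤ ∑ n ∈ Icc 1 N, (2 : ℝ) := sum_le_sum fun n _ => by linarith [(hmu n).2]
        _ = 2 * N := by simp [mul_comm]
    · refine ContinuousOn.add (Continuous.continuousOn ?_) (ContinuousOn.div (by fun_prop)
        (differentiable_LFunctionTrivChar₁ Q).continuous.continuousOn fun s hs => hne s hs)
      rw [continuous_iff_continuousAt]
      intro s
      rcases eq_or_ne s 1 with rfl | h1
      · rw [continuousAt_update_same]
        exact tendsto_riemannZeta_sub_one_div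
      · rw [continuousAt_update_of_ne h1]
        have h2 : s - 1 ≠ 0 := sub_ne_zero.2 h1
        exact ((differentiableAt_riemannZeta h1).sub
          ((differentiableAt_const _).div (by fun_prop) h2)).continuousAt
    · have h1 : s ≠ 1 := fun h => by simp [h] at hs
      have h2 : s - 1 ≠ 0 := sub_ne_zero.2 h1
      have hmul := LSeries.mul_mu_eq_one (1 : DirichletCharacter ℂ Q) hs
      rw [← LFunction_eq_LSeries _ hs] at hmul
      have hL0 : LFunction (1 : DirichletCharacter ℂ Q) s ≠ 0 := left_ne_zero_of_mul_eq_one hmul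
      have hsum : LSeriesSummable ((fun n : ℕ => (1 : DirichletCharacter ℂ Q) n) *
          (fun n : ℕ => (ArithmeticFunction.moebius n : ℂ))) s :=
        LSeriesSummable_mul _ <| ArithmeticFunction.LSeriesSummable_moebius_iff.mpr hs
      have h3 : LSeries (fun n => ((1 + muCoprime Q n : ℝ) : ℂ)) s =
          LSeries 1 s + LSeries ((fun n : ℕ => (1 : DirichletCharacter ℂ Q) n) *
          (fun n : ℕ => (ArithmeticFunction.moebius n : ℂ))) s := by
        rw [← LSeries_add (LSeriesSummable_one_iff.2 hs) hsum]
        refine LSeries_congr (fun {n} _ => ?_) s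
        simp only [Pi.add_apply, Pi.one_apply, Pi.mul_apply, muCoprime]
        by_cases hn : n.Coprime Q
        · rw [MulChar.one_apply ((ZMod.isUnit_iff_coprime n Q).2 hn), if_pos hn]
          simp
        · rw [MulChar.map_nonunit _ (fun h => hn ((ZMod.isUnit_iff_coprime n Q).1 h)), if_neg hn]
          simp
      rw [h3, LSeries_one_eq_riemannZeta hs, Function.update_of_ne h1,
        LFunctionTrivChar₁, Function.update_of_ne h1, eq_div_of_mul_eq hL0 ((mul_comm _ _).trans hmul)]
      rw [LFunctionTrivChar]
      push_cast
      field_simp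
      ring
  refine Sublinear.of_tendsto ?_
  have := hlim.sub_const 1
  rw [sub_self] at this
  refine this.congr' ?_
  filter_upwards [eventually_gt_atTop 0] with N hN
  have hN' : (N : ℝ) ≠ 0 := by positivity
  rw [sum_add_distrib]
  simp
  field_simp
  ring

/-! ### Partial summation and Axer's theorem -/

/-- Abel's inequality for partial sums against a nonnegative decreasing weight. -/
lemma abs_sum_mul_le_of_antitone {a w : ℕ → ℝ} {B : ℝ} {u v : ℕ}
    (hw : ∀ n, u < n → w (n + 1) ≤ w n) (hw0 : ∀ n, u < n → 0 ≤ w n) (hB0 : 0 ≤ B)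
    (hB : ∀ t, u ≤ t → t ≤ v → |∑ n ∈ Ioc u t, a n| ≤ B) :
    |∑ n ∈ Ioc u v, a n * w n| ≤ B * w (u + 1) := by
  have key : ∀ j, u + 1 + j ≤ v →
      |∑ n ∈ Ioc u (u + 1 + j), a n * w n - (∑ n ∈ Ioc u (u + 1 + j), a n) * w (u + 1 + j)|
        ≤ B * (w (u + 1) - w (u + 1 + j)) := by
    intro j
    induction j with
    | zero => simp
    | succ j ih =>
      intro hj
      have h1 := ih (by omega)
      have h2 := hB (u + 1 + j) (by omega) (by omega)
      have h3 := hw (u + 1 + j) (by omega)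
      rw [← add_assoc, sum_Ioc_succ_top (by omega), sum_Ioc_succ_top (by omega)]
      set S := ∑ n ∈ Ioc u (u + 1 + j), a n
      set T := ∑ n ∈ Ioc u (u + 1 + j), a n * w n
      have h4 : |S * (w (u + 1 + j) - w (u + 1 + j + 1))| ≤
          B * (w (u + 1 + j) - w (u + 1 + j + 1)) := by
        rw [abs_mul, abs_of_nonneg (sub_nonneg.2 h3)]
        exact mul_le_mul_of_nonneg_right h2 (sub_nonneg.2 h3)
      calc _ = |(T - S * w (u + 1 + j)) + S * (w (u + 1 + j) - w (u + 1 + j + 1))| := by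
            congr 1; ring
        _ ≤ _ := abs_add_le _ _
        _ ≤ _ := add_le_add h1 h4
        _ = _ := by ring
  rcases le_or_gt v u with h | h
  · rw [Ioc_eq_empty (by omega)]
    simpa using mul_nonneg hB0 (hw0 (u + 1) (by omega))
  · obtain ⟨j, rfl⟩ := Nat.exists_eq_add_of_lt h
    have h1 := key j (by omega)
    rw [show u + 1 + j = u + j + 1 by ring] at h1
    have h2 := hB (u + j + 1) (by omega) le_rfl
    have h3 := hw0 (u + j + 1) (by omega)
    set S := ∑ n ∈ Ioc u (u + j + 1), a n
    set T := ∑ n ∈ Ioc u (u + j + 1), a n * w n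
    calc |T| = |(T - S * w (u + j + 1)) + S * w (u + j + 1)| := by congr 1; ring
      _ ≤ _ := abs_add_le _ _
      _ ≤ B * (w (u + 1) - w (u + j + 1)) + B * w (u + j + 1) := by
          refine add_le_add h1 ?_
          rw [abs_mul, abs_of_nonneg h3]
          exact mul_le_mul_of_nonneg_right h2 h3
      _ = _ := by ring

lemma abs_sum_Ioc_le {a : ℕ → ℝ} {D : ℝ} {u v : ℕ}
    (hA : ∀ N, N ≤ v → |∑ n ∈ Icc 1 N, a n| ≤ D) (huv : u ≤ v) :
    |∑ n ∈ Ioc u v, a n| ≤ 2 * D := by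
  have h : ∑ n ∈ Icc 1 v, a n = ∑ n ∈ Icc 1 u, a n + ∑ n ∈ Ioc u v, a n := by
    have h1 : ∀ N : ℕ, Icc 1 N = Ioc 0 N := fun N => by ext; simp; omega
    rw [h1, h1, sum_Ioc_consecutive _ (Nat.zero_le u) huv]
  have h2 := hA v le_rfl
  have h3 := hA u huv
  rw [abs_le] at *
  constructor <;> linarith

/-- Axer's theorem: replacing `⌊N/n⌋` by `N/n` costs `o(N)` when the bounded coefficients
`a` have partial sums `o(N)`. -/
lemma sublinear_sum_mul_fract {a : ℕ → ℝ} {K : ℝ} (ha : ∀ n, |a n| ≤ K)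
    (hA : Sublinear fun N => ∑ n ∈ Icc 1 N, a n) :
    Sublinear fun N => ∑ n ∈ Icc 1 N, a n * ((N : ℝ) / n - (N / n : ℕ)) := by
  intro ε hε
  have hK : 0 ≤ K := (abs_nonneg _).trans (ha 0)
  obtain ⟨J, hJ⟩ := exists_nat_gt (2 * K / ε)
  have hJ0 : (0 : ℝ) < J := lt_of_le_of_lt (by positivity) hJ
  have hJ1 : 0 < J := by exact_mod_cast hJ0
  obtain ⟨C, hC, h⟩ := hA (ε / (8 * J)) (by positivity)
  refine ⟨4 * J * C, by positivity, fun N => ?_⟩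
  -- the fractional parts are bounded trivially for `n ≤ N / J`; for `n > N / J` both weights
  -- `N / n` and `⌊N / n⌋` are decreasing and at most `J`, so Abel summation applies
  set u := N / J with hu
  have huN : u ≤ N := Nat.div_le_self _ _
  have hlt : N < J * (u + 1) := by
    have := Nat.div_add_mod N J; have := Nat.mod_lt N hJ1; rw [mul_add, hu]; omega
  have hltR : (N : ℝ) < J * (u + 1) := by exact_mod_cast hlt
  have huR : (u : ℝ) ≤ N / J := Nat.cast_div_le
  have hsplit : ∑ n ∈ Icc 1 N, a n * ((N : ℝ) / n - (N / n : ℕ)) =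
      ∑ n ∈ Ioc 0 u, a n * ((N : ℝ) / n - (N / n : ℕ)) +
      (∑ n ∈ Ioc u N, a n * ((N : ℝ) / n) - ∑ n ∈ Ioc u N, a n * ((N / n : ℕ) : ℝ)) := by
    rw [← sum_sub_distrib, show Icc 1 N = Ioc 0 N by ext; simp; omega,
      ← sum_Ioc_consecutive _ (Nat.zero_le u) huN]
    congr 1
    exact sum_congr rfl fun n _ => by ring
  set D := ε / (8 * J) * N + C with hD
  have hD0 : 0 ≤ D := by positivity
  have hB : ∀ t, u ≤ t → t ≤ N → |∑ n ∈ Ioc u t, a n| ≤ 2 * D := fun t h1 h2 =>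
    abs_sum_Ioc_le (fun M hM => (h M).trans (by
      have : (M : ℝ) ≤ N := by exact_mod_cast hM.trans h2
      rw [hD]; gcongr)) h1
  have h1 : |∑ n ∈ Ioc 0 u, a n * ((N : ℝ) / n - (N / n : ℕ))| ≤ K * u := by
    refine (abs_sum_le_sum_abs _ _).trans ?_
    calc _ ≤ ∑ n ∈ Ioc 0 u, K := by
          refine sum_le_sum fun n hn => ?_
          have hn0 : 0 < n := (mem_Ioc.1 hn).1
          have hn' : (0 : ℝ) < n := by exact_mod_cast hn0
          have h2 : ((N / n : ℕ) : ℝ) ≤ N / n := Nat.cast_div_le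
          have h3 : (N : ℝ) / n < (N / n : ℕ) + 1 := by
            rw [div_lt_iff₀ hn']
            have := Nat.div_add_mod N n
            have := Nat.mod_lt N hn0
            have h4 : N < (N / n + 1) * n := by rw [add_mul, mul_comm]; omega
            exact_mod_cast h4
          rw [abs_mul, abs_of_nonneg (a := (N : ℝ) / n - (N / n : ℕ)) (by linarith)]
          calc |a n| * ((N : ℝ) / n - (N / n : ℕ)) ≤ K * 1 := mul_le_mul (ha n) (by linarith) (by linarith) hK
            _ = K := mul_one K
      _ = K * u := by simp [mul_comm]
  have h2 : |∑ n ∈ Ioc u N, a n * ((N : ℝ) / n)| ≤ 2 * D * J := by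
    refine (abs_sum_mul_le_of_antitone (u := u) (v := N) (w := fun n => (N : ℝ) / n) (fun n hn => ?_)
      (fun n _ => by positivity) (by positivity) hB).trans ?_
    · have : (0 : ℝ) < n := Nat.cast_pos.2 (Nat.zero_lt_of_lt hn)
      push_cast
      gcongr
      linarith
    · have : (N : ℝ) / ((u + 1 : ℕ) : ℝ) ≤ J := by
        rw [div_le_iff₀ (by positivity)]; push_cast; exact hltR.le
      gcongr
  have h3 : |∑ n ∈ Ioc u N, a n * ((N / n : ℕ) : ℝ)| ≤ 2 * D * J := by
    refine (abs_sum_mul_le_of_antitone (u := u) (v := N) (w := fun n => ((N / n : ℕ) : ℝ)) (fun n hn => ?_)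
      (fun n _ => by positivity) (by positivity) hB).trans ?_
    · exact_mod_cast Nat.div_le_div_left (Nat.le_succ n) (Nat.zero_lt_of_lt hn)
    · have : ((N / (u + 1) : ℕ) : ℝ) ≤ J := by
        exact_mod_cast (Nat.div_lt_of_lt_mul (by rwa [mul_comm] at hlt)).le
      gcongr
  beta_reduce
  rw [hsplit]
  have h4 : K * u ≤ ε / 2 * N := by
    rw [div_lt_iff₀ hε] at hJ
    calc K * u ≤ K * (N / J) := by gcongr
      _ = (K / J) * N := by ring
      _ ≤ ε / 2 * N := by
        refine mul_le_mul_of_nonneg_right ?_ (Nat.cast_nonneg N)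
        rw [div_le_iff₀ hJ0]; linarith
  have h5 : 2 * D * J = ε / 4 * N + 2 * J * C := by
    rw [hD]; field_simp; ring
  have := abs_add_le (∑ n ∈ Ioc 0 u, a n * ((N : ℝ) / n - (N / n : ℕ)))
    (∑ n ∈ Ioc u N, a n * ((N : ℝ) / n) - ∑ n ∈ Ioc u N, a n * ((N / n : ℕ) : ℝ))
  have := abs_sub (∑ n ∈ Ioc u N, a n * ((N : ℝ) / n)) (∑ n ∈ Ioc u N, a n * ((N / n : ℕ) : ℝ))
  linarith

lemma sum_Icc_filter_dvd {M : Type*} [AddCommMonoid M] (F : ℕ → M) {d : ℕ} (hd : 0 < d) (N : ℕ) :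
    ∑ n ∈ (Icc 1 N).filter (fun n => d ∣ n), F n = ∑ m ∈ Icc 1 (N / d), F (d * m) := by
  refine sum_nbij' (fun n => n / d) (fun m => d * m) ?_ ?_ ?_ ?_ ?_
  · intro n hn
    simp only [mem_filter, mem_Icc] at hn ⊢
    exact ⟨Nat.div_pos (Nat.le_of_dvd (by omega) hn.2) hd, Nat.div_le_div_right hn.1.2⟩
  · intro m hm
    simp only [mem_filter, mem_Icc] at hm ⊢
    refine ⟨⟨Nat.mul_pos hd hm.1, ?_⟩, dvd_mul_right _ _⟩
    calc d * m ≤ d * (N / d) := Nat.mul_le_mul_left d hm.2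
      _ ≤ N := Nat.mul_div_le N d
  · intro n hn
    exact Nat.mul_div_cancel' (mem_filter.1 hn).2
  · intro m _
    exact Nat.mul_div_cancel_left m hd
  · intro n hn
    rw [Nat.mul_div_cancel' (mem_filter.1 hn).2]

lemma sum_Icc_sum_divisors (a : ℕ → ℝ) (N : ℕ) :
    ∑ n ∈ Icc 1 N, ∑ d ∈ n.divisors, a d = ∑ d ∈ Icc 1 N, a d * ((N / d : ℕ) : ℝ) := by
  have h1 : ∀ n ∈ Icc 1 N, ∑ d ∈ n.divisors, a d = ∑ d ∈ Icc 1 N, if d ∣ n then a d else 0 := by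
    intro n hn
    rw [← sum_filter]
    refine sum_congr ?_ fun _ _ => rfl
    ext d
    simp only [Nat.mem_divisors, mem_filter, mem_Icc] at hn ⊢
    constructor
    · rintro ⟨h1, h2⟩
      exact ⟨⟨Nat.pos_of_dvd_of_pos h1 (by omega), (Nat.le_of_dvd (by omega) h1).trans hn.2⟩, h1⟩
    · rintro ⟨_, h⟩
      exact ⟨h, by omega⟩
  rw [sum_congr rfl h1, sum_comm]
  refine sum_congr rfl fun d hd => ?_
  rw [← sum_filter, sum_Icc_filter_dvd _ (mem_Icc.1 hd).1]
  simp [mul_comm]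

/-- By Axer's theorem, the mean value of `n ↦ ∑_{d ∣ n} a d` is the sum of `∑ a n / n`. -/
lemma tendsto_sum_div_of_sum_divisors {a : ℕ → ℝ} {K L : ℝ} (ha : ∀ n, |a n| ≤ K)
    (hA : Sublinear fun N => ∑ n ∈ Icc 1 N, a n)
    (hL : Tendsto (fun N : ℕ => (∑ n ∈ Icc 1 N, ∑ d ∈ n.divisors, a d) / N) atTop (𝓝 L)) :
    Tendsto (fun N : ℕ => ∑ n ∈ Icc 1 N, a n / n) atTop (𝓝 L) := by
  have h := hL.add (sublinear_sum_mul_fract ha hA).tendsto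
  rw [add_zero] at h
  refine h.congr' ?_
  filter_upwards [eventually_gt_atTop 0] with N hN
  have hN' : (N : ℝ) ≠ 0 := by positivity
  rw [sum_Icc_sum_divisors, ← add_div, ← sum_add_distrib, sum_div]
  refine sum_congr rfl fun n _ => ?_
  field_simp
  ring

/-! ### The Möbius function weighted by the smallest prime factor -/

/-- The trivial sieve bound, counting residues in blocks of length `Q`. -/
lemma card_coprime_le (Q N : ℕ) (hQ : 0 < Q) :
    (((Icc 1 N).filter fun n => Q.Coprime n).card : ℝ) ≤
      (Q.totient / Q : ℝ) * N + Q.totient := by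
  have h1 : Icc 1 N = Ico 1 (1 + N) := by ext; simp; omega
  have h2 := Nat.Ico_filter_coprime_le 1 N hQ.ne'
  rw [h1]
  have h3 : ((N / Q : ℕ) : ℝ) ≤ N / Q := Nat.cast_div_le
  calc (((Ico 1 (1 + N)).filter fun n => Q.Coprime n).card : ℝ)
      ≤ (Q.totient * (N / Q + 1) : ℕ) := by exact_mod_cast h2
    _ ≤ Q.totient * (N / Q + 1) := by push_cast; gcongr
    _ = _ := by ring

lemma totient_factorial_div_le (y : ℕ) :
    ((y.factorial.totient : ℝ) / y.factorial) ≤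
      Real.exp (-∑ n ∈ range (y + 1), Set.indicator {p : ℕ | p.Prime} (fun n => 1 / (n : ℝ)) n) := by
  have h0 : (0 : ℝ) < y.factorial := by exact_mod_cast y.factorial_pos
  have h1 : (y.factorial.totient : ℝ) =
      y.factorial * ∏ p ∈ y.factorial.primeFactors, (1 - (p : ℝ)⁻¹) := by
    have := Nat.totient_eq_mul_prod_factors y.factorial
    have h := congrArg (Rat.cast : ℚ → ℝ) this
    push_cast at h
    exact h
  rw [h1, mul_div_cancel_left₀ _ h0.ne']
  have h2 : y.factorial.primeFactors = (range (y + 1)).filter Nat.Prime := by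
    ext p
    simp only [Nat.mem_primeFactors, mem_filter, mem_range]
    constructor
    · rintro ⟨h1, h2, _⟩
      exact ⟨Nat.lt_succ_of_le ((h1.dvd_factorial).1 h2), h1⟩
    · rintro ⟨h1, h2⟩
      exact ⟨h2, h2.dvd_factorial.2 (Nat.le_of_lt_succ h1), y.factorial_ne_zero⟩
  have h3 : ∑ n ∈ range (y + 1), Set.indicator {p : ℕ | p.Prime} (fun n => 1 / (n : ℝ)) n =
      ∑ p ∈ y.factorial.primeFactors, (p : ℝ)⁻¹ := by
    rw [h2, sum_filter]
    refine sum_congr rfl fun n _ => ?_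
    simp [Set.indicator]
  rw [h3, ← sum_neg_distrib, Real.exp_sum]
  refine prod_le_prod (fun p hp => ?_) fun p _ => ?_
  · have : (1 : ℝ) ≤ p := by exact_mod_cast (Nat.prime_of_mem_primeFactors hp).one_le
    have := inv_le_one_of_one_le₀ this
    linarith
  · have := Real.add_one_le_exp (-(p : ℝ)⁻¹)
    linarith

/-- `φ(y!)/y! = ∏_{p ≤ y} (1 - 1/p)` becomes arbitrarily small, since `∑ 1/p` diverges. -/
lemma exists_totient_factorial_div_le {ε : ℝ} (hε : 0 < ε) :
    ∃ y : ℕ, ((y.factorial.totient : ℝ) / y.factorial) ≤ ε := by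
  have h := (not_summable_iff_tendsto_nat_atTop_of_nonneg (fun n => by
    refine Set.indicator_nonneg (fun n _ => by positivity) n)).1 not_summable_one_div_on_primes
  have h1 := (Real.tendsto_exp_neg_atTop_nhds_zero.comp h).comp (tendsto_add_atTop_nat 1)
  obtain ⟨y, hy⟩ := (h1.eventually (ge_mem_nhds hε)).exists
  exact ⟨y, (totient_factorial_div_le y).trans hy⟩

/-- An integer with smallest prime factor `p` and nonzero `μ` is `p m` with `m` coprime to all
primes up to `p`, that is, to `p!`. -/
lemma sum_moebius_minFac_eq {p : ℕ} (hp : p.Prime) (N : ℕ) :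
    ∑ n ∈ (Icc 2 N).filter (fun n => n.minFac = p), (ArithmeticFunction.moebius n : ℝ) =
      -∑ m ∈ Icc 1 (N / p), muCoprime p.factorial m := by
  have h1 : (Icc 2 N).filter (fun n => n.minFac = p) =
      ((Icc 1 N).filter (fun n => p ∣ n)).filter (fun n => n.minFac = p) := by
    ext n
    simp only [mem_filter, mem_Icc]
    constructor
    · rintro ⟨h1, h2⟩
      exact ⟨⟨by omega, h2 ▸ n.minFac_dvd⟩, h2⟩
    · rintro ⟨⟨h1, h2⟩, h3⟩
      have : p ≤ n := Nat.le_of_dvd (by omega) h2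
      have := hp.two_le
      exact ⟨by omega, h3⟩
  rw [h1, sum_filter, sum_Icc_filter_dvd _ hp.pos, ← sum_neg_distrib]
  refine sum_congr rfl fun m hm => ?_
  have hm1 : 1 ≤ m := (mem_Icc.1 hm).1
  unfold muCoprime
  by_cases hc : p ∣ m
  · have h2 : ¬ m.Coprime p.factorial := fun h =>
      hp.one_lt.ne' (Nat.dvd_one.1 (h ▸ Nat.dvd_gcd hc (hp.dvd_factorial.2 le_rfl)))
    have h3 : ArithmeticFunction.moebius (p * m) = 0 := by
      refine ArithmeticFunction.moebius_eq_zero_of_not_squarefree fun h => ?_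
      have := h p (mul_dvd_mul_left p hc)
      exact hp.one_lt.ne' (Nat.isUnit_iff.1 this)
    simp [h2, h3]
  · have hcop : p.Coprime m := (Nat.Prime.coprime_iff_not_dvd hp).2 hc
    have h2 : ArithmeticFunction.moebius (p * m) = -ArithmeticFunction.moebius m := by
      rw [ArithmeticFunction.isMultiplicative_moebius.map_mul_of_coprime hcop,
        ArithmeticFunction.moebius_apply_prime hp]
      ring
    have h3 : (p * m).minFac = p ↔ m.Coprime p.factorial := by
      rw [Nat.coprime_comm]
      constructor
      · intro h
        refine Nat.coprime_of_dvd fun q hq h3 h4 => ?_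
        have h5 : q ≤ p := hq.dvd_factorial.1 h3
        have h6 : p ≤ q := h ▸ Nat.minFac_le_of_dvd hq.two_le (h4.mul_left p)
        exact hc (le_antisymm h5 h6 ▸ h4)
      · intro h
        refine le_antisymm (Nat.minFac_le_of_dvd hp.two_le (dvd_mul_right _ _)) ?_
        have hne : p * m ≠ 1 := fun h => hp.one_lt.ne' (Nat.eq_one_of_mul_eq_one_right h)
        have hq := Nat.minFac_prime hne
        by_contra! hlt
        rcases (hq.dvd_mul).1 (Nat.minFac_dvd (p * m)) with h5 | h5
        · exact hlt.ne ((Nat.prime_dvd_prime_iff_eq hq hp).1 h5)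
        · exact hq.one_lt.ne' (Nat.dvd_one.1
            (h ▸ Nat.dvd_gcd (hq.dvd_factorial.2 hlt.le) h5))
    by_cases h4 : m.Coprime p.factorial
    · rw [if_pos (h3.2 h4), if_pos h4, h2]; simp
    · rw [if_neg (fun h => h4 (h3.1 h)), if_neg h4]; simp

/-- Twisting `μ` by a bounded function of the smallest prime factor keeps the partial sums `o(N)`:
small values of `minFac n` reduce to `μ` on integers coprime to `p!`, and large ones are rare. -/
lemma sublinear_moebius_minFac {h : ℕ → ℝ} {K : ℝ} (hh : ∀ p, |h p| ≤ K) :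
    Sublinear fun N => ∑ n ∈ Icc 2 N, (ArithmeticFunction.moebius n : ℝ) * h n.minFac := by
  intro ε hε
  have hK : 0 ≤ K := (abs_nonneg _).trans (hh 0)
  obtain ⟨y, hy⟩ := exists_totient_factorial_div_le (ε := ε / (2 * (K + 1))) (by positivity)
  have hQ : 0 < y.factorial := y.factorial_pos
  set Q := y.factorial with hQdef
  have hsmall : Sublinear fun N => ∑ p ∈ (range (y + 1)).filter Nat.Prime,
      h p * (-1 * ∑ m ∈ Icc 1 (N / p), muCoprime p.factorial m) :=
    Sublinear.sum _ fun p _ => (((sublinear_muCoprime _ p.factorial_ne_zero).comp_div p).const_mul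
      (-1)).const_mul (h p)
  obtain ⟨C, hC, hsm⟩ := hsmall (ε / 2) (half_pos hε)
  refine ⟨C + K * Q.totient, by positivity, fun N => ?_⟩
  have hs := hsm N
  beta_reduce at hs ⊢
  have hsplit : ∑ n ∈ Icc 2 N, (ArithmeticFunction.moebius n : ℝ) * h n.minFac =
      ∑ p ∈ (range (y + 1)).filter Nat.Prime,
        h p * (-1 * ∑ m ∈ Icc 1 (N / p), muCoprime p.factorial m) +
      ∑ n ∈ (Icc 2 N).filter (fun n => ¬ n.minFac ≤ y),
        (ArithmeticFunction.moebius n : ℝ) * h n.minFac := by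
    rw [← sum_filter_add_sum_filter_not (Icc 2 N) (fun n => n.minFac ≤ y)]
    congr 1
    rw [← sum_fiberwise_of_maps_to (s := (Icc 2 N).filter (fun n => n.minFac ≤ y))
      (t := (range (y + 1)).filter Nat.Prime) (g := Nat.minFac)]
    · refine sum_congr rfl fun p hp => ?_
      simp only [mem_filter, mem_range] at hp
      rw [neg_one_mul, ← sum_moebius_minFac_eq hp.2, mul_sum, filter_filter]
      have : (Icc 2 N).filter (fun n => n.minFac ≤ y ∧ n.minFac = p) =
          (Icc 2 N).filter (fun n => n.minFac = p) := by
        refine filter_congr fun n _ => ⟨fun h => h.2, fun h => ⟨by omega, h⟩⟩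
      rw [this]
      refine sum_congr rfl fun n hn => ?_
      rw [(mem_filter.1 hn).2, mul_comm]
    · intro n hn
      simp only [mem_filter, mem_Icc, mem_range] at hn ⊢
      exact ⟨by omega, Nat.minFac_prime (by omega)⟩
  have hlarge : |∑ n ∈ (Icc 2 N).filter (fun n => ¬ n.minFac ≤ y),
        (ArithmeticFunction.moebius n : ℝ) * h n.minFac| ≤ ε / 2 * N + K * Q.totient := by
    refine (abs_sum_le_sum_abs _ _).trans ?_
    calc _ ≤ ∑ n ∈ (Icc 2 N).filter (fun n => ¬ n.minFac ≤ y), K := by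
          refine sum_le_sum fun n _ => ?_
          rw [abs_mul]
          calc _ ≤ 1 * K := mul_le_mul (abs_moebius_le_one_real n) (hh _) (abs_nonneg _) zero_le_one
            _ = K := one_mul K
      _ = ((Icc 2 N).filter (fun n => ¬ n.minFac ≤ y)).card * K := by simp
      _ ≤ (((Icc 1 N).filter fun n => Q.Coprime n).card : ℝ) * K := by
          refine mul_le_mul_of_nonneg_right (Nat.cast_le.2 (card_le_card fun n hn => ?_)) hK
          simp only [mem_filter, mem_Icc] at hn ⊢
          exact ⟨⟨by omega, hn.1.2⟩, ((Nat.coprime_factorial_iff (by omega)).2 (not_le.1 hn.2)).symm⟩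
      _ ≤ ((ε / (2 * (K + 1))) * N + Q.totient) * K := by
          refine mul_le_mul_of_nonneg_right ((card_coprime_le Q N hQ).trans ?_) hK
          gcongr
      _ ≤ _ := by
          have : ε / (2 * (K + 1)) * K ≤ ε / 2 := by
            rw [div_mul_eq_mul_div, div_le_div_iff₀ (by positivity) (by positivity)]
            nlinarith
          have := mul_le_mul_of_nonneg_right this (Nat.cast_nonneg (α := ℝ) N)
          linarith
  rw [hsplit]
  have := abs_add_le (∑ p ∈ (range (y + 1)).filter Nat.Prime,
        h p * (-1 * ∑ m ∈ Icc 1 (N / p), muCoprime p.factorial m))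
      (∑ n ∈ (Icc 2 N).filter (fun n => ¬ n.minFac ≤ y),
        (ArithmeticFunction.moebius n : ℝ) * h n.minFac)
  linarith

/-! ### Alladi's duality -/

/-- The largest prime factor of `n`, with the value `0` for `n ≤ 1`. -/
def maxPrimeFac (n : ℕ) : ℕ := n.primeFactors.sup id

lemma le_maxPrimeFac {n p : ℕ} (hn : n ≠ 0) (hp : p.Prime) (h : p ∣ n) : p ≤ maxPrimeFac n :=
  le_sup (f := id) (Nat.mem_primeFactors.2 ⟨hp, h, hn⟩)

lemma maxPrimeFac_mem {n : ℕ} (hn : 2 ≤ n) : maxPrimeFac n ∈ n.primeFactors := by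
  obtain ⟨p, hp, h⟩ := exists_mem_eq_sup n.primeFactors
    (Nat.nonempty_primeFactors.2 (by omega)) id
  rw [maxPrimeFac, h]
  exact hp

lemma maxPrimeFac_prime {n : ℕ} (hn : 2 ≤ n) : (maxPrimeFac n).Prime :=
  Nat.prime_of_mem_primeFactors (maxPrimeFac_mem hn)

lemma maxPrimeFac_dvd {n : ℕ} (hn : 2 ≤ n) : maxPrimeFac n ∣ n :=
  Nat.dvd_of_mem_primeFactors (maxPrimeFac_mem hn)

lemma maxPrimeFac_mul_prime {m p : ℕ} (hm : m ≠ 0) (hp : p.Prime) (h : maxPrimeFac m ≤ p) :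
    maxPrimeFac (m * p) = p := by
  have : maxPrimeFac (m * p) = max (maxPrimeFac m) p := by
    rw [maxPrimeFac, Nat.primeFactors_mul hm hp.ne_zero, sup_union, hp.primeFactors,
      sup_singleton]
    rfl
  rw [this, max_eq_right h]

open ArithmeticFunction in
/-- Alladi's duality between smallest and largest prime factors: toggling the largest prime `P`
of `n` in a squarefree divisor `e ∉ {1, P}` flips the sign of `μ e` and keeps `minFac e`. -/
lemma sum_divisors_moebius_minFac (h : ℕ → ℝ) {n : ℕ} (hn : 2 ≤ n) :
    ∑ e ∈ n.divisors, (moebius e : ℝ) * h e.minFac = h 1 - h (maxPrimeFac n) := by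
  set P := maxPrimeFac n with hPdef
  have hP : P.Prime := maxPrimeFac_prime hn
  have hPn : P ∣ n := maxPrimeFac_dvd hn
  have hn0 : n ≠ 0 := by omega
  set F : ℕ → ℝ := fun e => (moebius e : ℝ) * h e.minFac with hF
  set S := ((n.divisors.filter Squarefree).erase 1).erase P with hS
  -- adjoining `P` to a squarefree divisor `e > 1` prime to `P`
  have key : ∀ e, e ∣ n → e ≠ 1 → ¬ P ∣ e → F e + F (e * P) = 0 := by
    intro e he he1 hPe
    have he0 : e ≠ 0 := fun h => hn0 (by simpa [h] using he)
    have hcop : e.Coprime P := ((Nat.Prime.coprime_iff_not_dvd hP).2 hPe).symm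
    have h1 : (e * P).minFac = e.minFac := by
      have hq := Nat.minFac_prime he1
      refine le_antisymm (Nat.minFac_le_of_dvd hq.two_le ((Nat.minFac_dvd e).mul_right P)) ?_
      have hne : e * P ≠ 1 := fun h => he1 (Nat.eq_one_of_mul_eq_one_right h)
      have hr := Nat.minFac_prime hne
      rcases hr.dvd_mul.1 (Nat.minFac_dvd (e * P)) with h2 | h2
      · exact Nat.minFac_le_of_dvd hr.two_le h2
      · rw [(Nat.prime_dvd_prime_iff_eq hr hP).1 h2]
        exact le_maxPrimeFac hn0 hq ((Nat.minFac_dvd e).trans he)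
    simp only [hF, h1, isMultiplicative_moebius.map_mul_of_coprime hcop, moebius_apply_prime hP]
    push_cast
    ring
  have hmem : ∀ e, e ∈ S ↔ e ≠ P ∧ e ≠ 1 ∧ e ∣ n ∧ Squarefree e := by
    intro e
    simp [hS, hn0]
  have hdiv : ∀ e, P ∣ e → Squarefree e → ¬ P ∣ e / P := by
    rintro e ⟨f, rfl⟩ hsq hd
    rw [Nat.mul_div_cancel_left f hP.pos] at hd
    exact hP.one_lt.ne' (Nat.isUnit_iff.1 (hsq P (mul_dvd_mul_left P hd)))
  have hzero : ∑ e ∈ S, F e = 0 := by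
    refine sum_involution (fun e _ => if P ∣ e then e / P else e * P) ?_ ?_ ?_ ?_
    · intro e he
      obtain ⟨h1, h2, h3, h4⟩ := (hmem e).1 he
      split_ifs with hd
      · have h5 := key (e / P) ((Nat.div_dvd_of_dvd hd).trans h3)
          (fun h => h1 (by rw [← Nat.div_mul_cancel hd, h, one_mul])) (hdiv e hd h4)
        rw [Nat.div_mul_cancel hd] at h5
        linarith
      · exact key e h3 h2 hd
    · intro e he _
      obtain ⟨h1, h2, h3, h4⟩ := (hmem e).1 he
      have he0 : 0 < e := Nat.pos_of_dvd_of_pos h3 (by omega)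
      split_ifs with hd
      · exact (Nat.div_lt_self he0 hP.one_lt).ne
      · intro h
        exact hd (h ▸ dvd_mul_left P e)
    · intro e he
      obtain ⟨h1, h2, h3, h4⟩ := (hmem e).1 he
      rw [hmem]
      split_ifs with hd
      · refine ⟨fun h => hdiv e hd h4 (dvd_of_eq h.symm),
          fun h => h1 (by rw [← Nat.div_mul_cancel hd, h, one_mul]),
          (Nat.div_dvd_of_dvd hd).trans h3, h4.squarefree_of_dvd (Nat.div_dvd_of_dvd hd)⟩
      · have hcop : e.Coprime P := ((Nat.Prime.coprime_iff_not_dvd hP).2 hd).symm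
        refine ⟨fun h => h2 ?_, fun h => h2 (Nat.eq_one_of_mul_eq_one_right h),
          hcop.mul_dvd_of_dvd_of_dvd h3 hPn, (Nat.squarefree_mul hcop).2 ⟨h4, hP.squarefree⟩⟩
        exact Nat.eq_of_mul_eq_mul_right hP.pos (h.trans (one_mul P).symm)
    · intro e he
      obtain ⟨h1, h2, h3, h4⟩ := (hmem e).1 he
      by_cases hd : P ∣ e
      · simp only [hd, if_true, hdiv e hd h4, if_false]
        exact Nat.div_mul_cancel hd
      · simp only [hd, if_false, dvd_mul_left, if_true]
        exact Nat.mul_div_cancel e hP.pos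
  have h1 : ∑ e ∈ n.divisors, F e = ∑ e ∈ n.divisors.filter Squarefree, F e := by
    rw [sum_filter]
    refine sum_congr rfl fun e _ => ?_
    split_ifs with hsq
    · rfl
    · simp [hF, moebius_eq_zero_of_not_squarefree hsq]
  rw [h1, ← add_sum_erase _ F (a := 1) (by simp [hn0]),
    ← add_sum_erase _ F (a := P) (by simp [hn0, hP.squarefree, hPn, hP.ne_one]), hzero]
  simp [hF, moebius_apply_prime hP, hP.minFac_eq]
  ring

/-- Densities of functions of the largest prime factor transfer to `μ`-weighted logarithmic sums
of the same functions of the smallest prime factor. -/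
lemma tendsto_sum_moebius_minFac {h : ℕ → ℝ} {K L : ℝ} (hh : ∀ p, |h p| ≤ K)
    (hL : Tendsto (fun N : ℕ => (∑ n ∈ Icc 2 N, h (maxPrimeFac n)) / N) atTop (𝓝 L)) :
    Tendsto (fun N : ℕ => ∑ n ∈ Icc 2 N, (ArithmeticFunction.moebius n : ℝ) * h n.minFac / n)
      atTop (𝓝 (-L)) := by
  have hK : 0 ≤ K := (abs_nonneg _).trans (hh 0)
  set a : ℕ → ℝ := fun n => if n = 1 then 0 else
    (ArithmeticFunction.moebius n : ℝ) * h n.minFac with ha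
  have hIcc : ∀ (F : ℕ → ℝ) (N : ℕ), F 1 = 0 → ∑ n ∈ Icc 1 N, F n = ∑ n ∈ Icc 2 N, F n := by
    intro F N hF
    refine (sum_subset (Icc_subset_Icc_left (by norm_num)) fun n h1 h2 => ?_).symm
    simp only [mem_Icc] at h1 h2
    rw [show n = 1 by omega, hF]
  have ha1 : a 1 = 0 := by simp [ha]
  have ha2 : ∀ n, 2 ≤ n → a n = (ArithmeticFunction.moebius n : ℝ) * h n.minFac := fun n hn => by
    simp [ha, show n ≠ 1 by omega]
  have hbd : ∀ n, |a n| ≤ K := by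
    intro n
    simp only [ha]
    split_ifs
    · simpa using hK
    · rw [abs_mul]
      calc _ ≤ 1 * K := mul_le_mul (abs_moebius_le_one_real n) (hh _) (abs_nonneg _) zero_le_one
        _ = K := one_mul K
  have h1 := tendsto_sum_div_of_sum_divisors (a := a) (L := -L) hbd
    ((sublinear_moebius_minFac hh).of_abs_le fun N => le_of_eq ?_) ?_
  · refine h1.congr fun N => ?_
    rw [hIcc _ _ (by simp [ha1])]
    exact sum_congr rfl fun n hn => by rw [ha2 n (mem_Icc.1 hn).1]
  · rw [hIcc _ _ ha1]
    exact congrArg _ (sum_congr rfl fun n hn => ha2 n (mem_Icc.1 hn).1)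
  · refine hL.neg.congr fun N => ?_
    rw [hIcc _ _ (by simp [ha1]), ← neg_div, ← sum_neg_distrib]
    congr 1
    refine sum_congr rfl fun n hn => ?_
    have hn2 := (mem_Icc.1 hn).1
    have hd := sum_divisors_moebius_minFac h hn2
    have h1n : 1 ∈ n.divisors := Nat.one_mem_divisors.2 (by omega)
    rw [← add_sum_erase _ _ h1n] at hd ⊢
    rw [ha1]
    have : ∑ d ∈ n.divisors.erase 1, a d = ∑ d ∈ n.divisors.erase 1,
        (ArithmeticFunction.moebius d : ℝ) * h d.minFac :=
      sum_congr rfl fun d hd => by simp only [ha]; rw [if_neg (ne_of_mem_erase hd)]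
    rw [this]
    simp at hd
    linarith

/-! ### Smooth numbers -/

open ArithmeticFunction in
/-- Mertens' upper bound, from `∑_{d ≤ y} Λ(d) ⌊y/d⌋ = ∑_{n ≤ y} log n ≤ y log y`. -/
lemma sum_vonMangoldt_div_le (y : ℕ) :
    ∑ d ∈ Icc 1 y, vonMangoldt d / d ≤ 2 * Real.log y := by
  rcases Nat.eq_zero_or_pos y with rfl | hy
  · simp
  have hy' : (0 : ℝ) < y := by exact_mod_cast hy
  have h1 : ∑ d ∈ Icc 1 y, vonMangoldt d * ((y / d : ℕ) : ℝ) ≤ y * Real.log y := by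
    rw [← sum_Icc_sum_divisors]
    calc _ ≤ ∑ n ∈ Icc 1 y, Real.log y := by
          refine sum_le_sum fun n hn => ?_
          rw [vonMangoldt_sum]
          have h1 := mem_Icc.1 hn
          exact Real.log_le_log (by exact_mod_cast h1.1) (by exact_mod_cast h1.2)
      _ = _ := by simp
  have h2 : y * ∑ d ∈ Icc 1 y, vonMangoldt d / d ≤
      2 * ∑ d ∈ Icc 1 y, vonMangoldt d * ((y / d : ℕ) : ℝ) := by
    rw [mul_sum, mul_sum]
    refine sum_le_sum fun d hd => ?_
    have h1 := mem_Icc.1 hd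
    have hd0 : (0 : ℝ) < d := by exact_mod_cast h1.1
    have h3 : (y : ℝ) / d ≤ 2 * (y / d : ℕ) := by
      rw [div_le_iff₀ hd0]
      have h4 : y ≤ 2 * (y / d) * d := by
        have h5 := Nat.div_add_mod y d
        have h6 := Nat.mod_lt y h1.1
        have h7 : 1 ≤ y / d := Nat.div_pos h1.2 h1.1
        nlinarith
      exact_mod_cast h4
    calc y * (vonMangoldt d / d) = vonMangoldt d * (y / d) := by ring
      _ ≤ vonMangoldt d * (2 * (y / d : ℕ)) := mul_le_mul_of_nonneg_left h3 vonMangoldt_nonneg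
      _ = _ := by ring
  have h3 : y * ∑ d ∈ Icc 1 y, vonMangoldt d / d ≤ y * (2 * Real.log y) := by linarith
  exact le_of_mul_le_mul_left h3 hy'

lemma sum_log_prime_div_le (y : ℕ) :
    ∑ p ∈ (Icc 1 y).filter Nat.Prime, Real.log p / p ≤ 2 * Real.log y := by
  refine le_trans ?_ (sum_vonMangoldt_div_le y)
  rw [sum_filter]
  refine sum_le_sum fun p _ => ?_
  split_ifs with hp
  · rw [ArithmeticFunction.vonMangoldt_apply_prime hp]
  · exact div_nonneg ArithmeticFunction.vonMangoldt_nonneg (Nat.cast_nonneg _)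

/-- The sum is `v_p(N!)`, and `(p - 1) v_p(N!) ≤ N` by Legendre's formula. -/
lemma sum_factorization_le {p : ℕ} (hp : p.Prime) (N : ℕ) :
    ∑ n ∈ Icc 1 N, (n.factorization p : ℝ) ≤ 2 * N / p := by
  have : Fact p.Prime := ⟨hp⟩
  have h1 : ∑ n ∈ Icc 1 N, n.factorization p = N.factorial.factorization p := by
    rw [← prod_Ico_id_eq_factorial, show Icc 1 N = Ico 1 (N + 1) from rfl,
      Nat.factorization_prod (fun n hn => by
      have := (mem_Ico.1 hn).1; omega)]
    simp [Finsupp.finsetSum_apply]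
  have h2 : (p - 1) * N.factorial.factorization p ≤ N := by
    rw [Nat.factorization_def _ hp, sub_one_mul_padicValNat_factorial]
    exact Nat.sub_le _ _
  rw [← Nat.cast_sum, h1, le_div_iff₀ (by exact_mod_cast hp.pos)]
  have h3 : N.factorial.factorization p * p ≤ 2 * N := by
    have h4 : p ≤ 2 * (p - 1) := by have := hp.two_le; omega
    calc _ ≤ N.factorial.factorization p * (2 * (p - 1)) := Nat.mul_le_mul_left _ h4
      _ = 2 * ((p - 1) * N.factorial.factorization p) := by ring
      _ ≤ 2 * N := Nat.mul_le_mul_left 2 h2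
  exact_mod_cast h3

/-- For `y`-smooth `n`, `log n = ∑_{p ≤ y} v_p(n) log p`; the bound follows by summing over `n`
first. -/
lemma sum_log_smooth_le (y N : ℕ) :
    ∑ n ∈ (Icc 1 N).filter (fun n => maxPrimeFac n ≤ y), Real.log n ≤ 4 * N * Real.log y := by
  calc ∑ n ∈ (Icc 1 N).filter (fun n => maxPrimeFac n ≤ y), Real.log n
      ≤ ∑ n ∈ (Icc 1 N).filter (fun n => maxPrimeFac n ≤ y),
        ∑ p ∈ (Icc 1 y).filter Nat.Prime, n.factorization p * Real.log p := by
        refine sum_le_sum fun n hn => ?_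
        simp only [mem_filter, mem_Icc] at hn
        rw [Real.log_nat_eq_sum_factorization, Finsupp.sum]
        refine sum_le_sum_of_subset_of_nonneg (fun p hp => ?_) fun p _ _ =>
          mul_nonneg (Nat.cast_nonneg _) (Real.log_natCast_nonneg _)
        rw [Nat.support_factorization] at hp
        have hpp := Nat.prime_of_mem_primeFactors hp
        simp only [mem_filter, mem_Icc]
        exact ⟨⟨hpp.one_le, (le_sup (f := id) hp).trans hn.2⟩, hpp⟩
    _ ≤ ∑ n ∈ Icc 1 N, ∑ p ∈ (Icc 1 y).filter Nat.Prime, n.factorization p * Real.log p :=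
        sum_le_sum_of_subset_of_nonneg (filter_subset _ _) fun n _ _ =>
          sum_nonneg fun p _ => mul_nonneg (Nat.cast_nonneg _) (Real.log_natCast_nonneg _)
    _ = ∑ p ∈ (Icc 1 y).filter Nat.Prime, (∑ n ∈ Icc 1 N, (n.factorization p : ℝ)) * Real.log p := by
        rw [sum_comm]
        exact sum_congr rfl fun p _ => (sum_mul _ _ _).symm
    _ ≤ ∑ p ∈ (Icc 1 y).filter Nat.Prime, (2 * N / p) * Real.log p :=
        sum_le_sum fun p hp => mul_le_mul_of_nonneg_right
          (sum_factorization_le (mem_filter.1 hp).2 N) (Real.log_natCast_nonneg _)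
    _ = 2 * N * ∑ p ∈ (Icc 1 y).filter Nat.Prime, Real.log p / p := by
        rw [mul_sum]
        exact sum_congr rfl fun p _ => by ring
    _ ≤ 2 * N * (2 * Real.log y) := by gcongr; exact sum_log_prime_div_le y
    _ = _ := by ring

/-- `y`-smooth numbers are rare when `log y` is small compared with `log N`. -/
lemma log_mul_card_smooth_le (y N : ℕ) :
    Real.log N * ((Icc 1 N).filter (fun n => maxPrimeFac n ≤ y)).card ≤
      Real.log N * Real.sqrt N + 8 * N * Real.log y := by
  -- for `n > √N`, `log N ≤ 2 log n`, so `sum_log_smooth_le` controls the count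
  set S := (Icc 1 N).filter (fun n => maxPrimeFac n ≤ y)
  have hlog : 0 ≤ Real.log N := Real.log_natCast_nonneg N
  have h1 : (S.card : ℝ) = (S.filter fun n => n ≤ N.sqrt).card +
      (S.filter fun n => ¬ n ≤ N.sqrt).card := by
    exact_mod_cast (card_filter_add_card_filter_not (s := S) (fun n => n ≤ N.sqrt)).symm
  have h2 : ((S.filter fun n => n ≤ N.sqrt).card : ℝ) ≤ Real.sqrt N := by
    have : (S.filter fun n => n ≤ N.sqrt).card ≤ N.sqrt := by
      calc _ ≤ (Icc 1 N.sqrt).card := card_le_card fun n hn => by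
            simp only [S, mem_filter, mem_Icc] at hn ⊢
            exact ⟨hn.1.1.1, hn.2⟩
        _ = N.sqrt := by simp
    exact (Nat.cast_le.2 this).trans Real.nat_sqrt_le_real_sqrt
  have h3 : Real.log N * (S.filter fun n => ¬ n ≤ N.sqrt).card ≤ 8 * N * Real.log y := by
    calc _ = ∑ n ∈ S.filter (fun n => ¬ n ≤ N.sqrt), Real.log N := by simp [mul_comm]
      _ ≤ ∑ n ∈ S.filter (fun n => ¬ n ≤ N.sqrt), 2 * Real.log n := by
          refine sum_le_sum fun n hn => ?_
          simp only [S, mem_filter, mem_Icc] at hn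
          have h4 : N ≤ n ^ 2 := by
            rw [sq]; exact (Nat.sqrt_lt.1 (not_le.1 hn.2)).le
          have hN : 0 < N := by omega
          calc Real.log N ≤ Real.log ((n : ℝ) ^ 2) :=
                Real.log_le_log (by exact_mod_cast hN) (by exact_mod_cast h4)
            _ = 2 * Real.log n := by rw [Real.log_pow]; norm_num
      _ ≤ ∑ n ∈ S, 2 * Real.log n := sum_le_sum_of_subset_of_nonneg (filter_subset _ _)
          fun n _ _ => mul_nonneg zero_le_two (Real.log_natCast_nonneg _)
      _ = 2 * ∑ n ∈ S, Real.log n := (mul_sum _ _ _).symm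
      _ ≤ 2 * (4 * N * Real.log y) := by gcongr; exact sum_log_smooth_le y N
      _ = _ := by ring
  rw [h1, mul_add]
  exact add_le_add (mul_le_mul_of_nonneg_left h2 hlog) h3

/-! ### Equidistribution of the largest prime factor -/

lemma Sublinear.of_eventually {A : ℕ → ℝ}
    (h : ∀ ε : ℝ, 0 < ε → ∀ᶠ N : ℕ in atTop, |A N| ≤ ε * N) : Sublinear A := by
  refine Sublinear.of_tendsto (Metric.tendsto_nhds.2 fun ε hε => ?_)
  filter_upwards [h (ε / 2) (half_pos hε), eventually_gt_atTop 0] with N hN hN0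
  have hN' : (0 : ℝ) < N := by exact_mod_cast hN0
  rw [Real.dist_eq, sub_zero, abs_div, Nat.abs_cast, div_lt_iff₀ hN']
  have : 0 < ε * N := by positivity
  linarith

lemma tendsto_log_natCast : Tendsto (fun N : ℕ => Real.log N) atTop atTop :=
  Real.tendsto_log_atTop.comp tendsto_natCast_atTop_atTop

lemma eventually_sqrt_le {ε : ℝ} (hε : 0 < ε) : ∀ᶠ N : ℕ in atTop, Real.sqrt N ≤ ε * N := by
  have h : Tendsto (fun N : ℕ => Real.sqrt N) atTop atTop :=
    Real.tendsto_sqrt_atTop.comp tendsto_natCast_atTop_atTop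
  filter_upwards [h.eventually_ge_atTop ε⁻¹] with N hN
  have h1 : 1 ≤ ε * Real.sqrt N := by
    rw [inv_le_iff_one_le_mul₀' hε] at hN
    exact hN
  have h2 : 0 ≤ Real.sqrt N := Real.sqrt_nonneg _
  calc Real.sqrt N ≤ ε * Real.sqrt N * Real.sqrt N := le_mul_of_one_le_left h2 h1
    _ = ε * N := by rw [mul_assoc, Real.mul_self_sqrt (Nat.cast_nonneg N)]

lemma sublinear_card_smooth (y : ℕ) :
    Sublinear fun N => (((Icc 1 N).filter (fun n => maxPrimeFac n ≤ y)).card : ℝ) := by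
  refine Sublinear.of_eventually fun ε hε => ?_
  filter_upwards [eventually_sqrt_le (half_pos hε),
    tendsto_log_natCast.eventually_ge_atTop (16 * Real.log y / ε),
    tendsto_log_natCast.eventually_gt_atTop 0] with N h1 h2 h3
  have h4 := log_mul_card_smooth_le y N
  rw [Nat.abs_cast]
  rw [div_le_iff₀ hε] at h2
  refine le_of_mul_le_mul_left (h4.trans ?_) h3
  have h5 := mul_le_mul_of_nonneg_left h1 h3.le
  have h6 := mul_le_mul_of_nonneg_right h2 (Nat.cast_nonneg (α := ℝ) N)
  linarith

/-- Factoring out the largest prime: `n = m p` with `p = P(n) ≥ P(m)`. -/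
lemma sum_maxPrimeFac_eq (f : ℕ → ℝ) (N y : ℕ) :
    ∑ n ∈ (Icc 2 N).filter (fun n => y < maxPrimeFac n), f (maxPrimeFac n) =
      ∑ m ∈ Icc 1 N, ∑ p ∈ (Ioc (max y (maxPrimeFac m - 1)) (N / m)).filter Nat.Prime, f p := by
  rw [sum_sigma']
  refine sum_nbij' (fun n => ⟨n / maxPrimeFac n, maxPrimeFac n⟩) (fun x => x.1 * x.2) ?_ ?_ ?_ ?_ ?_
  · intro n hn
    simp only [mem_filter, mem_Icc] at hn
    have hP := maxPrimeFac_prime hn.1.1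
    have hd := maxPrimeFac_dvd hn.1.1
    have hm : 0 < n / maxPrimeFac n := Nat.div_pos (Nat.le_of_dvd (by omega) hd) hP.pos
    have hle : maxPrimeFac (n / maxPrimeFac n) ≤ maxPrimeFac n := by
      refine Finset.sup_le fun q hq => ?_
      exact le_maxPrimeFac (by omega) (Nat.prime_of_mem_primeFactors hq)
        ((Nat.dvd_of_mem_primeFactors hq).trans (Nat.div_dvd_of_dvd hd))
    have := hP.pos
    simp only [mem_sigma, mem_filter, mem_Icc, mem_Ioc]
    refine ⟨⟨hm, (Nat.div_le_self _ _).trans hn.1.2⟩, ⟨by omega, ?_⟩, hP⟩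
    rw [Nat.le_div_iff_mul_le hm, mul_comm, Nat.div_mul_cancel hd]
    exact hn.1.2
  · rintro ⟨m, p⟩ hx
    simp only [mem_sigma, mem_filter, mem_Icc, mem_Ioc] at hx
    obtain ⟨⟨h1, h2⟩, ⟨h3, h4⟩, hp⟩ := hx
    simp only [mem_filter, mem_Icc]
    rw [maxPrimeFac_mul_prime (by omega) hp (by omega)]
    rw [Nat.le_div_iff_mul_le h1] at h4
    refine ⟨⟨?_, by rwa [mul_comm]⟩, by omega⟩
    have := hp.two_le
    nlinarith
  · intro n hn
    simp only [mem_filter, mem_Icc] at hn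
    exact Nat.div_mul_cancel (maxPrimeFac_dvd hn.1.1)
  · rintro ⟨m, p⟩ hx
    simp only [mem_sigma, mem_filter, mem_Icc, mem_Ioc] at hx
    obtain ⟨⟨h1, h2⟩, ⟨h3, h4⟩, hp⟩ := hx
    have h := maxPrimeFac_mul_prime (m := m) (by omega) hp (by omega)
    simp only [h, Nat.mul_div_cancel m hp.pos]
  · intro n hn
    rfl

/-- If `f` has small prime sums with weights `log p`, then its values at largest prime factors
exceeding `y` nearly cancel: write `n = m p` with `p` the largest prime factor, remove the weight
`log p` by partial summation for each `m`, and sum over `m` the bounds `δ N / m + C`. -/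
lemma abs_sum_maxPrimeFac_le {f : ℕ → ℝ} {δ C : ℝ} (hδ : 0 ≤ δ) (hC : 0 ≤ C)
    (hA : ∀ M : ℕ, |∑ n ∈ Icc 1 M, if n.Prime then f n * Real.log n else 0| ≤ δ * M + C)
    {N y : ℕ} (hy : 1 ≤ y) :
    |∑ n ∈ (Icc 2 N).filter (fun n => y < maxPrimeFac n), f (maxPrimeFac n)| ≤
      2 * N * (δ * (1 + Real.log N) + C) / Real.log (y + 1) := by
  have hy1 : (1 : ℝ) ≤ y := by exact_mod_cast hy
  have hlogy : 0 < Real.log (y + 1) := Real.log_pos (by linarith)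
  rw [sum_maxPrimeFac_eq]
  have hinner : ∀ m ∈ Icc 1 N,
      |∑ p ∈ (Ioc (max y (maxPrimeFac m - 1)) (N / m)).filter Nat.Prime, f p| ≤
        2 * (δ * (N * (m : ℝ)⁻¹) + C) / Real.log (y + 1) := by
    intro m hm
    have hm0 : (0 : ℝ) < m := by exact_mod_cast (mem_Icc.1 hm).1
    set u := max y (maxPrimeFac m - 1) with hu
    have hyu : y ≤ u := le_max_left _ _
    set D := δ * (N * (m : ℝ)⁻¹) + C with hD
    have hD0 : 0 ≤ D := by positivity
    have h1 : ∑ p ∈ (Ioc u (N / m)).filter Nat.Prime, f p = ∑ n ∈ Ioc u (N / m),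
        (if n.Prime then f n * Real.log n else 0) * (Real.log n)⁻¹ := by
      rw [sum_filter]
      refine sum_congr rfl fun n _ => ?_
      split_ifs with hn
      · have : 0 < Real.log n := Real.log_pos (by exact_mod_cast hn.one_lt)
        field_simp
      · simp
    have hlogpos : ∀ n : ℕ, u < n → 0 < Real.log n := fun n hn =>
      Real.log_pos (by exact_mod_cast (by omega : 1 < n))
    rw [h1]
    refine (abs_sum_mul_le_of_antitone (u := u) (v := N / m) (w := fun n => (Real.log n)⁻¹)
      (B := 2 * D) (fun n hn => ?_) (fun n hn => (inv_pos.2 (hlogpos n hn)).le) (by positivity)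
      fun t ht1 ht2 => abs_sum_Ioc_le (fun M hM => (hA M).trans ?_) ht1).trans ?_
    · refine inv_anti₀ (hlogpos n hn) (Real.log_le_log ?_ ?_)
      · exact_mod_cast Nat.zero_lt_of_lt hn
      · push_cast; linarith
    · have : (M : ℝ) ≤ N * (m : ℝ)⁻¹ := by
        calc (M : ℝ) ≤ (N / m : ℕ) := by exact_mod_cast hM.trans ht2
          _ ≤ N / m := Nat.cast_div_le
          _ = _ := div_eq_mul_inv _ _
      rw [hD]; gcongr
    · rw [div_eq_mul_inv]
      have : (y : ℝ) + 1 ≤ ((u + 1 : ℕ) : ℝ) := by exact_mod_cast Nat.succ_le_succ hyu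
      have h2 : (Real.log ((u + 1 : ℕ) : ℝ))⁻¹ ≤ (Real.log (y + 1))⁻¹ :=
        inv_anti₀ hlogy (Real.log_le_log (by linarith) this)
      exact mul_le_mul_of_nonneg_left h2 (by positivity)
  have hH : ∑ m ∈ Icc 1 N, ((m : ℝ))⁻¹ ≤ 1 + Real.log N := by
    have := harmonic_le_one_add_log N
    rw [harmonic_eq_sum_Icc] at this
    push_cast at this
    exact this
  calc _ ≤ ∑ m ∈ Icc 1 N, 2 * (δ * (N * (m : ℝ)⁻¹) + C) / Real.log (y + 1) :=
        (abs_sum_le_sum_abs _ _).trans (sum_le_sum hinner)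
    _ = (2 * (δ * N * ∑ m ∈ Icc 1 N, ((m : ℝ))⁻¹) + 2 * N * C) / Real.log (y + 1) := by
        rw [← sum_div, ← mul_sum, sum_add_distrib, ← mul_sum, ← mul_sum]
        simp
        ring
    _ ≤ (2 * (δ * N * (1 + Real.log N)) + 2 * N * C) / Real.log (y + 1) := by gcongr
    _ = _ := by ring

/-- The largest prime factor is equidistributed in the reduced residue classes. -/
lemma sublinear_apWeight_maxPrimeFac {q : ℕ} [NeZero q] {a : ZMod q} (ha : IsUnit a) :
    Sublinear fun N => ∑ n ∈ Icc 2 N, apWeight a (maxPrimeFac n) := by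
  refine Sublinear.of_eventually fun η hη => ?_
  -- `ε` makes the `N ^ ε`-smooth numbers contribute at most `η N / 2`
  set ε := η / 32 with hεdef
  have hε : 0 < ε := by positivity
  obtain ⟨C, hC, hA⟩ := sublinear_apWeight ha (ε * η / 16) (by positivity)
  filter_upwards [eventually_sqrt_le (ε := η / 4) (by positivity),
    tendsto_log_natCast.eventually_ge_atTop (8 * C / (ε * η)),
    tendsto_log_natCast.eventually_ge_atTop 1, eventually_ge_atTop 1] with N h1 h2 h3 hN1
  have hN : (1 : ℝ) ≤ N := by exact_mod_cast hN1
  have hlog : 0 < Real.log N := by linarith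
  -- the smoothness threshold `N ^ ε`
  set y := ⌊(N : ℝ) ^ ε⌋₊ with hy
  have hpow : 1 ≤ (N : ℝ) ^ ε := Real.one_le_rpow hN hε.le
  have hy1 : 1 ≤ y := (Nat.one_le_floor_iff _).2 hpow
  have hy1' : (1 : ℝ) ≤ y := by exact_mod_cast hy1
  have hlogy : Real.log y ≤ ε * Real.log N := by
    rw [← Real.log_rpow (by linarith)]
    exact Real.log_le_log (by linarith) (Nat.floor_le (by linarith))
  have hlogy1 : ε * Real.log N ≤ Real.log (y + 1) := by
    rw [← Real.log_rpow (by linarith)]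
    exact Real.log_le_log (by linarith) (Nat.lt_floor_add_one _).le
  have hsmooth : |∑ n ∈ (Icc 2 N).filter (fun n => ¬ y < maxPrimeFac n),
      apWeight a (maxPrimeFac n)| ≤ η / 2 * N := by
    calc _ ≤ ∑ n ∈ (Icc 2 N).filter (fun n => ¬ y < maxPrimeFac n), (1 : ℝ) :=
          (abs_sum_le_sum_abs _ _).trans (sum_le_sum fun n _ => abs_apWeight_le a _)
      _ = (((Icc 2 N).filter (fun n => ¬ y < maxPrimeFac n)).card : ℝ) := by simp
      _ ≤ (((Icc 1 N).filter (fun n => maxPrimeFac n ≤ y)).card : ℝ) := by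
          refine Nat.cast_le.2 (card_le_card fun n hn => ?_)
          simp only [mem_filter, mem_Icc, not_lt] at hn ⊢
          exact ⟨⟨by omega, hn.1.2⟩, hn.2⟩
      _ ≤ η / 2 * N := by
          refine le_of_mul_le_mul_left ((log_mul_card_smooth_le y N).trans ?_) hlog
          have h5 := mul_le_mul_of_nonneg_left h1 hlog.le
          have h6 := mul_le_mul_of_nonneg_left hlogy (by positivity : (0 : ℝ) ≤ 8 * N)
          have h7 : 8 * (N : ℝ) * (ε * Real.log N) = Real.log N * (η / 4 * N) := by
            rw [hεdef]; ring
          linarith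
  have hmain := abs_sum_maxPrimeFac_le (by positivity) hC hA (N := N) hy1
  have hmain2 : 2 * N * (ε * η / 16 * (1 + Real.log N) + C) / Real.log (y + 1) ≤ η / 2 * N := by
    have h5 : 8 * C ≤ Real.log N * (ε * η) := (div_le_iff₀ (by positivity)).1 h2
    calc _ ≤ 2 * N * (ε * η / 16 * (1 + Real.log N) + C) / (ε * Real.log N) := by
          gcongr
      _ ≤ η / 2 * N := by
          rw [div_le_iff₀ (by positivity)]
          have h6 : ε * η / 16 * (1 + Real.log N) + C ≤ ε * η / 4 * Real.log N := by
            have : ε * η * 1 ≤ ε * η * Real.log N := by gcongr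
            linarith
          have := mul_le_mul_of_nonneg_left h6 (by positivity : (0 : ℝ) ≤ 2 * N)
          linarith
  rw [← sum_filter_add_sum_filter_not (Icc 2 N) (fun n => y < maxPrimeFac n)]
  refine (abs_add_le _ _).trans ?_
  linarith

/-! ### Generalized Ramanujan sums -/

lemma minFac_mul_eq_min {d e : ℕ} (hd : 2 ≤ d) (he : 2 ≤ e) :
    (d * e).minFac = min e.minFac d.minFac := by
  have h1 := Nat.minFac_prime (n := d) (by omega)
  have h2 := Nat.minFac_prime (n := e) (by omega)
  have hne : d * e ≠ 1 := fun h => by have := Nat.eq_one_of_mul_eq_one_right h; omega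
  have h3 := Nat.minFac_prime hne
  refine le_antisymm (le_min ?_ ?_) (min_le_iff.2 ?_)
  · exact Nat.minFac_le_of_dvd h2.two_le ((Nat.minFac_dvd e).mul_left d)
  · exact Nat.minFac_le_of_dvd h1.two_le ((Nat.minFac_dvd d).mul_right e)
  · rcases h3.dvd_mul.1 (Nat.minFac_dvd (d * e)) with h | h
    · exact .inr (Nat.minFac_le_of_dvd h3.two_le h)
    · exact .inl (Nat.minFac_le_of_dvd h3.two_le h)

lemma tendsto_sum_Icc_two_const_div (c : ℝ) :
    Tendsto (fun N : ℕ => (∑ _n ∈ Icc 2 N, c) / N) atTop (𝓝 c) := by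
  have h : Tendsto (fun N : ℕ => c - c * (N : ℝ)⁻¹) atTop (𝓝 (c - c * 0)) :=
    tendsto_const_nhds.sub (tendsto_inv_atTop_nhds_zero_nat.const_mul c)
  rw [mul_zero, sub_zero] at h
  refine h.congr' ?_
  filter_upwards [eventually_ge_atTop 1] with N hN
  have hN' : (N : ℝ) ≠ 0 := by positivity
  rw [sum_const, Nat.card_Icc, nsmul_eq_mul, show N + 1 - 2 = N - 1 by omega, Nat.cast_sub hN]
  field_simp
  simp

/-- The indicator of the residue class `a` modulo `q`. -/
noncomputable def apIndicator {q : ℕ} (a : ZMod q) (p : ℕ) : ℝ := if (p : ZMod q) = a then 1 else 0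

lemma abs_apIndicator_le {q : ℕ} (a : ZMod q) (p : ℕ) : |apIndicator a p| ≤ 1 := by
  unfold apIndicator
  split_ifs <;> simp

/-- Alladi's formula for `μ`. -/
lemma tendsto_sum_moebius_apIndicator {q : ℕ} [NeZero q] {a : ZMod q} (ha : IsUnit a) :
    Tendsto (fun N : ℕ => ∑ n ∈ Icc 2 N,
      (ArithmeticFunction.moebius n : ℝ) * apIndicator a n.minFac / n) atTop
      (𝓝 (-(1 / (q.totient : ℝ)))) := by
  refine tendsto_sum_moebius_minFac (abs_apIndicator_le a) ?_
  have h := (sublinear_apWeight_maxPrimeFac ha).tendsto.add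
    (tendsto_sum_Icc_two_const_div (1 / (q.totient : ℝ)))
  rw [zero_add] at h
  refine h.congr fun N => ?_
  rw [← add_div, ← sum_add_distrib]
  congr 1
  exact sum_congr rfl fun n _ => by simp [apWeight, apIndicator]

/-- Truncating the argument at `r` makes the density of values at largest prime factors trivial:
almost every `n` has a prime factor exceeding `r`. -/
lemma tendsto_sum_moebius_min {h : ℕ → ℝ} (hh : ∀ p, |h p| ≤ 1) (r : ℕ) :
    Tendsto (fun N : ℕ => ∑ n ∈ Icc 2 N,
      (ArithmeticFunction.moebius n : ℝ) * h (min n.minFac r) / n) atTop (𝓝 (-h r)) := by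
  refine tendsto_sum_moebius_minFac (h := fun p => h (min p r)) (fun p => hh _) ?_
  have hsub : Sublinear fun N => ∑ n ∈ Icc 2 N, (h (min (maxPrimeFac n) r) - h r) := by
    refine ((sublinear_card_smooth r).const_mul 2).of_abs_le fun N => ?_
    refine le_trans ?_ (le_abs_self _)
    calc _ ≤ ∑ n ∈ Icc 2 N, if maxPrimeFac n ≤ r then (2 : ℝ) else 0 := by
          refine (abs_sum_le_sum_abs _ _).trans (sum_le_sum fun n _ => ?_)
          split_ifs with hn
          · have h1 := abs_sub (h (min (maxPrimeFac n) r)) (h r)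
            linarith [hh (min (maxPrimeFac n) r), hh r]
          · rw [min_eq_right (by omega)]; simp
      _ = 2 * (((Icc 2 N).filter (fun n => maxPrimeFac n ≤ r)).card : ℝ) := by
          rw [← sum_filter]; simp [mul_comm]
      _ ≤ _ := by
          refine mul_le_mul_of_nonneg_left (Nat.cast_le.2 (card_le_card ?_)) zero_le_two
          exact filter_subset_filter _ (Icc_subset_Icc_left (by norm_num))
  have h2 := hsub.tendsto.add (tendsto_sum_Icc_two_const_div (h r))
  rw [zero_add] at h2
  refine h2.congr fun N => ?_
  rw [← add_div, ← sum_add_distrib]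
  congr 1
  exact sum_congr rfl fun n _ => by simp

/-- The contribution of the multiples `n = d e`: only `d = 1` survives in the limit. -/
lemma tendsto_sum_moebius_minFac_mul {q : ℕ} [NeZero q] {a : ZMod q} (ha : IsUnit a) {d : ℕ}
    (hd : 1 ≤ d) :
    Tendsto (fun N : ℕ => ∑ e ∈ Icc 1 N, if 2 ≤ d * e then
      (ArithmeticFunction.moebius e : ℝ) * apIndicator a (d * e).minFac / e else 0) atTop
      (𝓝 (if d = 1 then -(1 / (q.totient : ℝ)) else 0)) := by
  have hsplit : ∀ (F : ℕ → ℝ) (N : ℕ), 1 ≤ N →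
      ∑ n ∈ Icc 1 N, F n = F 1 + ∑ n ∈ Icc 2 N, F n := by
    intro F N hN
    rw [← add_sum_erase _ F (mem_Icc.2 ⟨le_rfl, hN⟩)]
    congr 2
    ext n
    simp only [mem_erase, mem_Icc]
    omega
  split_ifs with h1
  · subst h1
    refine (tendsto_sum_moebius_apIndicator ha).congr' ?_
    filter_upwards [eventually_ge_atTop 1] with N hN
    rw [hsplit _ N hN]
    simp only [one_mul]
    rw [if_neg (by norm_num), zero_add]
    exact sum_congr rfl fun n hn => (if_pos (mem_Icc.1 hn).1).symm
  · have hd2 : 2 ≤ d := by omega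
    have h := (tendsto_sum_moebius_min (abs_apIndicator_le a) d.minFac).const_add
      (apIndicator a d.minFac)
    rw [add_neg_cancel] at h
    refine h.congr' ?_
    filter_upwards [eventually_ge_atTop 1] with N hN
    rw [hsplit _ N hN, mul_one, if_pos hd2]
    congr 1
    · simp
    · refine sum_congr rfl fun n hn => ?_
      have hn2 := (mem_Icc.1 hn).1
      rw [if_pos (by nlinarith), minFac_mul_eq_min hd2 hn2]

/-- Writing `n = d e` in the partial sums; only the finitely many `d` with `d ^ s ∣ m` occur. -/
lemma sum_genRamanujanSum_eq (k : ℕ) (ℓ : ℤ) (m s : ℕ) (hm : 1 ≤ m) (hs : 1 ≤ s)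
    (g : ℕ → ℂ) (N : ℕ) :
    ∑ n ∈ (Icc 2 N).filter (fun n => (Nat.minFac n : ℤ) ≡ ℓ [ZMOD (k : ℤ)]),
      genRamanujanSum g s m n / n =
    ∑ d ∈ (Icc 1 m).filter (fun d => d ^ s ∣ m), g d / d *
      ((∑ e ∈ Icc 1 (N / d), if 2 ≤ d * e then (ArithmeticFunction.moebius e : ℝ) *
        apIndicator (ℓ : ZMod k) (d * e).minFac / e else 0 : ℝ) : ℂ) := by
  have hgen : ∀ n, n ≠ 0 → genRamanujanSum g s m n =
      ∑ d ∈ (Icc 1 m).filter (fun d => d ^ s ∣ m),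
        if d ∣ n then g d * (ArithmeticFunction.moebius (n / d) : ℂ) else 0 := by
    intro n hn
    rw [genRamanujanSum, ← sum_filter, filter_filter]
    refine sum_congr ?_ fun _ _ => rfl
    ext d
    simp only [mem_filter, Nat.mem_divisors, mem_Icc]
    constructor
    · rintro ⟨⟨h1, _⟩, h2⟩
      have hd : 0 < d := Nat.pos_of_dvd_of_pos h1 (by omega)
      exact ⟨⟨hd, (Nat.le_self_pow (by omega) d).trans (Nat.le_of_dvd (by omega) h2)⟩, h2, h1⟩
    · rintro ⟨_, h2, h1⟩
      exact ⟨⟨h1, hn⟩, h2⟩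
  have hind : ∀ n : ℕ, ((n : ℤ) ≡ ℓ [ZMOD (k : ℤ)]) ↔ (n : ZMod k) = (ℓ : ZMod k) := by
    intro n
    rw [← ZMod.intCast_eq_intCast_iff, Int.cast_natCast]
  have hfilter : (Icc 2 N).filter (fun n => (Nat.minFac n : ℤ) ≡ ℓ [ZMOD (k : ℤ)]) =
      (Icc 1 N).filter (fun n => 2 ≤ n ∧ (Nat.minFac n : ℤ) ≡ ℓ [ZMOD (k : ℤ)]) := by
    ext n
    simp only [mem_filter, mem_Icc]
    constructor
    · rintro ⟨h1, h2⟩; exact ⟨⟨by omega, h1.2⟩, h1.1, h2⟩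
    · rintro ⟨h1, h2, h3⟩; exact ⟨⟨h2, h1.2⟩, h3⟩
  rw [hfilter, sum_filter]
  calc _ = ∑ n ∈ Icc 1 N, ∑ d ∈ (Icc 1 m).filter (fun d => d ^ s ∣ m),
        if d ∣ n then (if 2 ≤ n ∧ (Nat.minFac n : ℤ) ≡ ℓ [ZMOD (k : ℤ)] then
          g d * (ArithmeticFunction.moebius (n / d) : ℂ) / n else 0) else 0 := by
        refine sum_congr rfl fun n hn => ?_
        rw [hgen n (by have := (mem_Icc.1 hn).1; omega), sum_div]
        split_ifs with h
        · refine sum_congr rfl fun d _ => ?_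
          split_ifs <;> simp
        · simp
    _ = _ := by
        rw [sum_comm]
        refine sum_congr rfl fun d hd => ?_
        have hd0 : 0 < d := (mem_Icc.1 (mem_filter.1 hd).1).1
        rw [← sum_filter, sum_Icc_filter_dvd _ hd0]
        push_cast
        rw [mul_sum]
        refine sum_congr rfl fun e _ => ?_
        rw [Nat.mul_div_cancel_left e hd0]
        simp only [hind]
        by_cases h2 : 2 ≤ d * e
        · by_cases h3 : ((d * e).minFac : ZMod k) = (ℓ : ZMod k)
          · simp only [h2, h3, apIndicator, and_self, if_true]
            push_cast
            rw [mul_one, div_mul_div_comm]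
          · simp [h3, apIndicator]
        · simp [h2]

theorem alladi_formula_genRamanujanSum (k : ℕ) (hk : 1 ≤ k) (ℓ : ℤ)
    (hlk : Int.gcd ℓ k = 1) (m s : ℕ) (hm : 1 ≤ m) (hs : 1 ≤ s)
    (g : ℕ → ℂ) (hg : g 1 = 1) :
    Tendsto
      (fun x : ℝ =>
        ∑ n ∈ (Finset.Icc 2 ⌊x⌋₊).filter
            (fun n => (Nat.minFac n : ℤ) ≡ ℓ [ZMOD (k : ℤ)]),
          genRamanujanSum g s m n / n)
      atTop (nhds (-(1 / (Nat.totient k : ℂ)))) := by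
  have : NeZero k := ⟨by omega⟩
  have ha : IsUnit (ℓ : ZMod k) := by
    rw [ZMod.coe_int_isUnit_iff_isCoprime, isCoprime_comm]
    exact Int.isCoprime_iff_gcd_eq_one.2 hlk
  have hN : Tendsto (fun N : ℕ => ∑ n ∈ (Finset.Icc 2 N).filter
      (fun n => (Nat.minFac n : ℤ) ≡ ℓ [ZMOD (k : ℤ)]), genRamanujanSum g s m n / n)
      atTop (nhds (-(1 / (Nat.totient k : ℂ)))) := by
    simp_rw [sum_genRamanujanSum_eq k ℓ m s hm hs g]
    have hlim := tendsto_finsetSum ((Icc 1 m).filter (fun d => d ^ s ∣ m)) fun d hd =>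
      ((Complex.continuous_ofReal.tendsto _).comp ((tendsto_sum_moebius_minFac_mul ha
        (mem_Icc.1 (mem_filter.1 hd).1).1).comp (Nat.tendsto_div_const_atTop
        (Nat.one_le_iff_ne_zero.1 (mem_Icc.1 (mem_filter.1 hd).1).1)))).const_mul (g d / d)
    convert! hlim using 2
    rw [sum_eq_single 1]
    · simp [hg]
    · intro d _ hd
      simp [hd]
    · intro h
      exact absurd (mem_filter.2 ⟨mem_Icc.2 ⟨le_rfl, hm⟩, by simp⟩) h
  exact hN.comp tendsto_nat_floor_atTop
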